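/- arXiv:2412.14891 — 8 statements merged into one kernel-verified Lean document; each statement's English description precedes it below -/
import Mathlib

section
/- Let G be a 3-graph on an n-element vertex set V. Suppose that for every vertex v ∈ V, every fractional cover of the link graph L(v) has size at least n/3. Then every fractional cover of G has size at least n/3. -/
/-!
Let `v` be a vertex of minimum weight `m` in a fractional cover `c` of a `k`-graph. If `k * m ≥ 1`,
every weight is at least `1 / k`. Otherwise `x ↦ (c x - m) / (1 - k * m)` covers the link of `v`:
for an edge `e` through `v`, the excesses `c x - m` over `e \ {v}` add up to at least `1 - k * m`,
since `v` itself has excess `0`. If every fractional cover of the link has size at least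
`s ≤ n / k`, then `∑ c ≥ s * (1 - k * m) + n * m = s + m * (n - s * k) ≥ s`.
-/

section TruncatedSums

variable {ι M : Type*} [AddCommMonoid M] [LinearOrder M] [IsOrderedAddMonoid M]

theorem le_sum_min_of_le_sum {s : Finset ι} {f : ι → M} {a : M} (ha : 0 ≤ a)
    (hf : ∀ i ∈ s, 0 ≤ f i) (h : a ≤ ∑ i ∈ s, f i) : a ≤ ∑ i ∈ s, min a (f i) := by
  by_cases hlarge : ∃ i ∈ s, a ≤ f i
  · obtain ⟨i, hi, hai⟩ := hlarge
    calc a = min a (f i) := (min_eq_left hai).symm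
      _ ≤ ∑ j ∈ s, min a (f j) :=
        Finset.single_le_sum (f := fun j => min a (f j)) (fun j hj => le_min ha (hf j hj)) hi
  · push Not at hlarge
    rwa [Finset.sum_congr rfl fun i hi => min_eq_right (hlarge i hi).le]

end TruncatedSums

section FractionalCovers

variable {V 𝕜 : Type*} [Field 𝕜]

/-- The normalized excess `(c x - c v) / (1 - k * c v)` of the weight of `x` over that of `v`, which
turns a cover `c` of a hypergraph of rank at most `k` into a cover of the link of `v`. It is
meaningful when `k * c v < 1`. -/
def normalizedExcess (c : V → 𝕜) (k : ℕ) (v x : V) : 𝕜 :=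
  (c x - c v) / (1 - k * c v)

theorem sum_normalizedExcess (c : V → 𝕜) (k : ℕ) (v : V) (s : Finset V) :
    ∑ x ∈ s, normalizedExcess c k v x = (∑ x ∈ s, c x - s.card * c v) / (1 - k * c v) := by
  simp only [normalizedExcess, ← Finset.sum_div, Finset.sum_sub_distrib, Finset.sum_const,
    nsmul_eq_mul]

variable [LinearOrder 𝕜]

/-- Fractional covers of the hypergraph with edge set `E`: weights in `[0, 1]` on the vertices
that add up to at least `1` on every edge. The link of `v` is `E.memberSubfamily v`; a cover of the
link also carries a weight at `v`, so its size has to be taken over the other vertices. -/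
structure IsFractionalCover (E : Finset (Finset V)) (c : V → 𝕜) : Prop where
  nonneg : ∀ x, 0 ≤ c x
  le_one : ∀ x, c x ≤ 1
  one_le_sum : ∀ e ∈ E, 1 ≤ ∑ x ∈ e, c x

variable [IsStrictOrderedRing 𝕜] {E : Finset (Finset V)} {c : V → 𝕜} {k : ℕ} {v : V}

theorem normalizedExcess_nonneg (hv : k * c v < 1) {x : V} (hx : c v ≤ c x) :
    0 ≤ normalizedExcess c k v x :=
  div_nonneg (sub_nonneg.2 hx) (sub_nonneg.2 hv.le)

theorem isFractionalCover_min_one (hc : ∀ x, 0 ≤ c x) (hE : ∀ e ∈ E, 1 ≤ ∑ x ∈ e, c x) :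
    IsFractionalCover E fun x => min 1 (c x) where
  nonneg x := le_min zero_le_one (hc x)
  le_one _ := min_le_left _ _
  one_le_sum e he := le_sum_min_of_le_sum zero_le_one (fun x _ => hc x) (hE e he)

namespace IsFractionalCover

variable [DecidableEq V]

theorem one_le_sum_normalizedExcess (hc : IsFractionalCover E c) (hE : ∀ e ∈ E, e.card ≤ k)
    (hv : k * c v < 1) {p : Finset V} (hp : p ∈ E.memberSubfamily v) :
    1 ≤ ∑ x ∈ p, normalizedExcess c k v x := by
  obtain ⟨he, hvp⟩ := Finset.mem_memberSubfamily.1 hp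
  have hcover : 1 ≤ c v + ∑ x ∈ p, c x := by
    simpa only [Finset.sum_insert hvp] using hc.one_le_sum _ he
  have hcard : (p.card + 1 : 𝕜) ≤ k := by
    exact_mod_cast Finset.card_insert_of_notMem hvp ▸ hE _ he
  have hweight : (p.card + 1) * c v ≤ k * c v := mul_le_mul_of_nonneg_right hcard (hc.nonneg v)
  rw [sum_normalizedExcess, one_le_div (sub_pos.2 hv)]
  linarith

variable [Fintype V]

theorem exists_memberSubfamily_sum_le (hc : IsFractionalCover E c) (hE : ∀ e ∈ E, e.card ≤ k)
    (hv : k * c v < 1) (hmin : ∀ x, c v ≤ c x) :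
    ∃ d : V → 𝕜, IsFractionalCover (E.memberSubfamily v) d ∧
      ∑ x ∈ Finset.univ.erase v, d x ≤ (∑ x, c x - Fintype.card V * c v) / (1 - k * c v) := by
  have hnonneg (x : V) : 0 ≤ normalizedExcess c k v x := normalizedExcess_nonneg hv (hmin x)
  refine ⟨fun x => min 1 (normalizedExcess c k v x),
    isFractionalCover_min_one hnonneg fun p => hc.one_le_sum_normalizedExcess hE hv, ?_⟩
  calc ∑ x ∈ Finset.univ.erase v, min 1 (normalizedExcess c k v x)
      ≤ ∑ x ∈ Finset.univ.erase v, normalizedExcess c k v x :=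
        Finset.sum_le_sum fun x _ => min_le_right _ _
    _ ≤ ∑ x, normalizedExcess c k v x :=
        Finset.sum_le_univ_sum_of_nonneg hnonneg
    _ = (∑ x, c x - Fintype.card V * c v) / (1 - k * c v) :=
        sum_normalizedExcess c k v Finset.univ

end IsFractionalCover

theorem stmt_0_general [Fintype V] [DecidableEq V] (hk : 0 < k) (hE : ∀ e ∈ E, e.card ≤ k) {s : 𝕜}
    (hs : s ≤ Fintype.card V / k)
    (hlink : ∀ (v : V) (d : V → 𝕜), IsFractionalCover (E.memberSubfamily v) d →
      s ≤ ∑ x ∈ Finset.univ.erase v, d x)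
    (hc : IsFractionalCover E c) : s ≤ ∑ x, c x := by
  have hk' : (0 : 𝕜) < k := Nat.cast_pos.2 hk
  by_cases hlight : ∃ x, k * c x < 1
  · obtain ⟨x, hx⟩ := hlight
    have : Nonempty V := ⟨x⟩
    obtain ⟨v, hmin⟩ := Finite.exists_min c
    have hv : k * c v < 1 := (mul_le_mul_of_nonneg_left (hmin x) hk'.le).trans_lt hx
    obtain ⟨d, hd, hsum⟩ := hc.exists_memberSubfamily_sum_le hE hv hmin
    have hexcess : s * (1 - k * c v) ≤ ∑ x, c x - Fintype.card V * c v :=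
      (le_div_iff₀ (sub_pos.2 hv)).1 ((hlink v d hd).trans hsum)
    have hslack : s * k * c v ≤ Fintype.card V * c v :=
      mul_le_mul_of_nonneg_right ((le_div_iff₀ hk').1 hs) (hc.nonneg v)
    linarith
  · push Not at hlight
    calc s ≤ Fintype.card V / k := hs
      _ = ∑ _x : V, (1 / k : 𝕜) := by simp [div_eq_mul_inv]
      _ ≤ ∑ x, c x := Finset.sum_le_sum fun x _ => (div_le_iff₀' hk').2 (hlight x)

end FractionalCovers

/-- Let `G` be a 3-graph on an `n`-element vertex set `V`. Suppose that for
every vertex `v ∈ V`, every fractional cover of the link graph `L(v)` has size at least `n/3`.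
Then every fractional cover of `G` has size at least `n/3`. -/
theorem stmt_0 {V : Type*} [Fintype V] [DecidableEq V] (n : ℕ)
    (hn : Fintype.card V = n)
    (E : Finset (Finset V)) (hE : ∀ e ∈ E, e.card = 3)
    (hlink : ∀ v : V, ∀ c : V → ℝ,
      (∀ x, 0 ≤ c x) → (∀ x, c x ≤ 1) →
      (∀ p : Finset V, p.card = 2 → v ∉ p → insert v p ∈ E → 1 ≤ ∑ x ∈ p, c x) →
      (n : ℝ) / 3 ≤ ∑ x ∈ Finset.univ.erase v, c x) :
    ∀ c : V → ℝ, (∀ x, 0 ≤ c x) → (∀ x, c x ≤ 1) →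
      (∀ e ∈ E, 1 ≤ ∑ x ∈ e, c x) →
      (n : ℝ) / 3 ≤ ∑ x, c x := by
  intro c hnonneg hle_one hcover
  refine stmt_0_general three_pos (fun e he => (hE e he).le) (by simp [hn]) (fun v d hd => ?_)
    ⟨hnonneg, hle_one, hcover⟩
  exact hlink v d hd.nonneg hd.le_one fun p _ hvp hp =>
    hd.one_le_sum p (Finset.mem_memberSubfamily.2 ⟨hp, hvp⟩)
end

section
/- Let G be a 3-graph on an n-element vertex set. Suppose that for every vertex v, the link graph L(v) contains a fractional matching of size at least n/3. Then G has a perfect fractional matching, i.e. a fractional matching of size n/3. -/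
/-!
The argument works for `k`-graphs whose links all have a fractional matching of size `s ≤ n / k`.
By linear programming duality it suffices to show that every fractional vertex cover `w` has total
weight at least `s`. Let `v` be a vertex of minimum weight `m`. The excess `w - m` gives weight at
least `1 - k * m` to every edge through `v`, all of it on the link of `v`, so the fractional
matching in that link forces a total excess of at least `s * (1 - k * m)`. Adding back `m` on every
vertex restores at least `s * k * m`, because `s * k ≤ n`.
-/

open Finset Matrix

section Duality

theorem nonpos_of_forall_mem_Iic_lt {M : Type*} [AddCommGroup M] [PartialOrder M]
    [IsOrderedAddMonoid M] [Module ℝ M] [PosSMulMono ℝ M] {f : M →ₗ[ℝ] ℝ} {c : M} {r : ℝ}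
    (hf : ∀ y ∈ Set.Iic c, r < f y) {x : M} (hx : 0 ≤ x) : f x ≤ 0 := by
  by_contra! hpos
  have hr : r < f c := hf c Set.self_mem_Iic
  have hlt : r < f (c - ((f c - r) / f x) • x) :=
    hf _ (sub_le_self c (smul_nonneg (div_nonneg (sub_nonneg.2 hr.le) hpos.le) hx))
  rw [map_sub, map_smul, smul_eq_mul, div_mul_cancel₀ _ hpos.ne', sub_sub_cancel] at hlt
  exact hlt.false

theorem exists_mem_stdSimplex_vecMul_le {ι κ : Type*} [Fintype ι] [Fintype κ]
    {A : Matrix ι κ ℝ} {c : κ → ℝ}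
    (h : ∀ w : κ → ℝ, 0 ≤ w → ∀ u : ℝ, (∀ i, u ≤ (A *ᵥ w) i) → u ≤ c ⬝ᵥ w) :
    ∃ μ ∈ stdSimplex ℝ ι, μ ᵥ* A ≤ c := by
  classical
  by_contra! hnot
  have hdisj : Disjoint (A.vecMulLinear '' stdSimplex ℝ ι) (Set.Iic c) := by
    rw [Set.disjoint_left]
    rintro _ ⟨μ, hμ, rfl⟩
    exact hnot μ hμ
  obtain ⟨f, u, r, hlt_u, hur, hr_lt⟩ := geometric_hahn_banach_compact_closed
    ((convex_stdSimplex ℝ ι).linear_image A.vecMulLinear)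
    ((isCompact_stdSimplex ℝ ι).image A.vecMulLinear.continuous_of_finiteDimensional)
    (convex_Iic c) isClosed_Iic hdisj
  let w : κ → ℝ := fun x ↦ -f (Pi.single x 1)
  have hf (y : κ → ℝ) : f y = -(y ⬝ᵥ w) := by
    conv_lhs => rw [pi_eq_sum_univ' y]
    simp [w, dotProduct]
  have hw : 0 ≤ w := fun x ↦ neg_nonneg.2 <|
    nonpos_of_forall_mem_Iic_lt (f := f.toLinearMap) hr_lt (Pi.single_nonneg.2 zero_le_one)
  have hrow (i : ι) : -u ≤ (A *ᵥ w) i := by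
    have hi := hlt_u _ ⟨Pi.single i 1, single_mem_stdSimplex ℝ i, rfl⟩
    rw [hf, vecMulLinear_apply, ← dotProduct_mulVec, single_one_dotProduct] at hi
    linarith
  have hc := hr_lt c Set.self_mem_Iic
  rw [hf] at hc
  linarith [h w hw (-u) hrow]

end Duality

section Hypergraph

variable {V : Type*} [DecidableEq V] {E : Finset (Finset V)} {ω : Finset V → ℝ} {w : V → ℝ}
  {k : ℕ} {s : ℝ}

/-- A fractional matching in the hypergraph with edge set `E`. The weight `ω` is a total function
with values in `[0, 1]`; its values outside `E` are irrelevant to the vertex condition. -/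
structure IsFractionalMatching (E : Finset (Finset V)) (ω : Finset V → ℝ) : Prop where
  nonneg (e : Finset V) : 0 ≤ ω e
  le_one (e : Finset V) : ω e ≤ 1
  sum_le_one (v : V) : ∑ e ∈ E with v ∈ e, ω e ≤ 1

/-- A fractional vertex cover of the hypergraph with edge set `E`, the linear programming dual of a
fractional matching. -/
structure IsFractionalCover_s1 (E : Finset (Finset V)) (w : V → ℝ) : Prop where
  nonneg (v : V) : 0 ≤ w v
  one_le_sum (e : Finset V) (he : e ∈ E) : 1 ≤ ∑ v ∈ e, w v

theorem exists_isFractionalMatching_extension (hE : ∅ ∉ E) {μ : E → ℝ} (hμ : ∀ e, 0 ≤ μ e)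
    (hload : ∀ v, ∑ e : E with v ∈ e.1, μ e ≤ 1) :
    ∃ ω, IsFractionalMatching E ω ∧ ∑ e ∈ E, ω e = ∑ e, μ e := by
  let ω : Finset V → ℝ := Function.extend Subtype.val μ 0
  have hω (e : E) : ω e = μ e := Subtype.val_injective.extend_apply _ _ e
  have hω_notMem {e : Finset V} (he : e ∉ E) : ω e = 0 :=
    Function.extend_apply' _ _ _ fun ⟨a, ha⟩ ↦ he (ha ▸ a.2)
  have hnonneg (e : Finset V) : 0 ≤ ω e := by
    by_cases he : e ∈ E
    · exact (hμ ⟨e, he⟩).trans_eq (hω ⟨e, he⟩).symm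
    · exact (hω_notMem he).ge
  have hvertex (v : V) : ∑ e ∈ E with v ∈ e, ω e ≤ 1 := by
    simpa only [sum_filter, ← sum_coe_sort E, hω] using hload v
  refine ⟨ω, ⟨hnonneg, fun e ↦ ?_, hvertex⟩, by simp only [← sum_coe_sort E, hω]⟩
  by_cases he : e ∈ E
  · obtain ⟨v, hv⟩ : e.Nonempty := nonempty_iff_ne_empty.2 (ne_of_mem_of_not_mem he hE)
    exact (single_le_sum (fun a _ ↦ hnonneg a) (mem_filter.2 ⟨he, hv⟩)).trans (hvertex v)
  · exact (hω_notMem he).trans_le zero_le_one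

theorem exists_isFractionalMatching_sum_eq [Fintype V] (hE : ∅ ∉ E) (hs : 0 ≤ s)
    (hcover : ∀ w, IsFractionalCover_s1 E w → s ≤ ∑ v, w v) :
    ∃ ω, IsFractionalMatching E ω ∧ ∑ e ∈ E, ω e = s := by
  obtain rfl | hs := hs.eq_or_lt
  · exact ⟨0, ⟨by simp, by simp, by simp⟩, by simp⟩
  let A : Matrix E V ℝ := of fun e v ↦ if v ∈ e.1 then s else 0
  have hA (w : V → ℝ) (e : E) : (A *ᵥ w) e = s * ∑ v ∈ e.1, w v := by
    simp [A, mulVec, dotProduct, mul_sum]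
  obtain ⟨μ, ⟨hμ_nonneg, hμ_sum⟩, hμA⟩ : ∃ μ ∈ stdSimplex ℝ E, μ ᵥ* A ≤ 1 := by
    refine exists_mem_stdSimplex_vecMul_le fun w hw u hu ↦ ?_
    rw [one_dotProduct]
    obtain hu_nonpos | hu_pos := le_or_gt u 0
    · exact hu_nonpos.trans (sum_nonneg fun v _ ↦ hw v)
    have hscaled : IsFractionalCover_s1 E fun v ↦ s / u * w v :=
      ⟨fun v ↦ mul_nonneg (div_pos hs hu_pos).le (hw v), fun e he ↦ by
        rw [← mul_sum, div_mul_eq_mul_div, one_le_div hu_pos, ← hA w ⟨e, he⟩]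
        exact hu ⟨e, he⟩⟩
    have := hcover _ hscaled
    rwa [← mul_sum, div_mul_eq_mul_div, le_div_iff₀ hu_pos, mul_le_mul_iff_right₀ hs] at this
  have hload (v : V) : ∑ e : E with v ∈ e.1, s * μ e ≤ 1 := by
    simpa [A, vecMul, dotProduct, sum_filter, mul_comm] using hμA v
  have hext := exists_isFractionalMatching_extension hE
    (fun e ↦ mul_nonneg hs.le (hμ_nonneg e)) hload
  rwa [← mul_sum, hμ_sum, mul_one] at hext

theorem IsFractionalMatching.sum_mul_le_sum [Fintype V] (hω : IsFractionalMatching E ω)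
    (hw : ∀ v, 0 ≤ w v) {t : ℝ} (ht : ∀ e ∈ E, t ≤ ∑ v ∈ e, w v) :
    (∑ e ∈ E, ω e) * t ≤ ∑ v, w v :=
  calc
    (∑ e ∈ E, ω e) * t = ∑ e ∈ E, ω e * t := sum_mul ..
    _ ≤ ∑ e ∈ E, ω e * ∑ v ∈ e, w v :=
      sum_le_sum fun e he ↦ mul_le_mul_of_nonneg_left (ht e he) (hω.nonneg e)
    _ = ∑ v, (∑ e ∈ E with v ∈ e, ω e) * w v := by
      simp_rw [mul_sum, sum_mul]
      exact sum_comm' (by simp)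
    _ ≤ ∑ v, w v := sum_le_sum fun v _ ↦ mul_le_of_le_one_left (hw v) (hω.sum_le_one v)

theorem IsFractionalCover_s1.one_sub_mul_le_sum_link (hw : IsFractionalCover_s1 E w)
    (hE : (E : Set (Finset V)).Sized k) {v : V} {p : Finset V} (hp : p ∈ E.memberSubfamily v) :
    1 - k * w v ≤ ∑ x ∈ p, (w x - w v) := by
  obtain ⟨hpE, hvp⟩ := mem_memberSubfamily.1 hp
  calc
    1 - k * w v ≤ (∑ x ∈ insert v p, w x) - k * w v := by gcongr; exact hw.one_le_sum _ hpE
    _ = ∑ x ∈ insert v p, (w x - w v) := by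
      rw [sum_sub_distrib, sum_const, hE hpE, nsmul_eq_mul]
    _ = ∑ x ∈ p, (w x - w v) := by rw [sum_insert hvp, sub_self, zero_add]

theorem IsFractionalCover_s1.le_sum_of_link [Fintype V] [Nonempty V] (hw : IsFractionalCover_s1 E w)
    (hE : (E : Set (Finset V)).Sized k) (hs₀ : 0 ≤ s) (hs : k * s ≤ Fintype.card V)
    (hlink : ∀ v, ∃ ω, IsFractionalMatching (E.memberSubfamily v) ω ∧
      s ≤ ∑ p ∈ E.memberSubfamily v, ω p) :
    s ≤ ∑ v, w v := by
  obtain ⟨v, hmin⟩ := Finite.exists_min w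
  obtain ⟨ω, hω, hsize⟩ := hlink v
  have hexcess : s * (1 - k * w v) ≤ ∑ x, (w x - w v) := by
    obtain hneg | hpos := le_total (1 - k * w v) 0
    · exact (mul_nonpos_of_nonneg_of_nonpos hs₀ hneg).trans <|
        sum_nonneg fun x _ ↦ sub_nonneg.2 (hmin x)
    · exact (mul_le_mul_of_nonneg_right hsize hpos).trans <|
        hω.sum_mul_le_sum (fun x ↦ sub_nonneg.2 (hmin x)) fun p ↦ hw.one_sub_mul_le_sum_link hE
  have hadd_back : k * s * w v ≤ Fintype.card V * w v := by gcongr; exact hw.nonneg v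
  have hsum : ∑ x, (w x - w v) = ∑ x, w x - Fintype.card V * w v := by
    rw [sum_sub_distrib, sum_const, card_univ, nsmul_eq_mul]
  linarith

theorem filter_insert_mem_eq_memberSubfamily [Fintype V]
    (hE : (E : Set (Finset V)).Sized (k + 1)) (v : V) :
    (univ.powersetCard k).filter (fun p ↦ v ∉ p ∧ insert v p ∈ E) = E.memberSubfamily v := by
  ext p
  simp only [mem_filter, mem_powersetCard, subset_univ, true_and, mem_memberSubfamily]
  refine ⟨fun h ↦ h.2.symm, fun ⟨hpE, hvp⟩ ↦ ⟨?_, hvp, hpE⟩⟩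
  simpa [card_insert_of_notMem hvp] using hE hpE

theorem exists_isFractionalMatching_memberSubfamily [Fintype V]
    (hE : (E : Set (Finset V)).Sized (k + 1)) {v : V}
    (hlink : ∃ ω : Finset V → ℝ, (∀ p, 0 ≤ ω p) ∧ (∀ p, ω p ≤ 1) ∧
      (∀ x, x ≠ v → ∑ p ∈ univ.powersetCard k with v ∉ p ∧ insert v p ∈ E ∧ x ∈ p, ω p ≤ 1) ∧
      s ≤ ∑ p ∈ univ.powersetCard k with v ∉ p ∧ insert v p ∈ E, ω p) :
    ∃ ω, IsFractionalMatching (E.memberSubfamily v) ω ∧ s ≤ ∑ p ∈ E.memberSubfamily v, ω p := by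
  have hfilter := filter_insert_mem_eq_memberSubfamily hE v
  obtain ⟨ω, hnonneg, hle_one, hload, hsize⟩ := hlink
  refine ⟨ω, ⟨hnonneg, hle_one, fun x ↦ ?_⟩, hfilter ▸ hsize⟩
  obtain rfl | hx := eq_or_ne x v
  · rw [filter_false_of_mem fun p hp ↦ (mem_memberSubfamily.1 hp).2, sum_empty]
    exact zero_le_one
  · simpa only [← hfilter, filter_filter, and_assoc] using hload x hx

theorem stmt_1_general [Fintype V] (hk : k ≠ 0) (hE : (E : Set (Finset V)).Sized k)
    (hs₀ : 0 ≤ s) (hs : k * s ≤ Fintype.card V)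
    (hlink : ∀ v, ∃ ω, IsFractionalMatching (E.memberSubfamily v) ω ∧
      s ≤ ∑ p ∈ E.memberSubfamily v, ω p) :
    ∃ ω, IsFractionalMatching E ω ∧ ∑ e ∈ E, ω e = s := by
  have hempty : ∅ ∉ E := fun h ↦ hk (hE h).symm
  refine exists_isFractionalMatching_sum_eq hempty hs₀ fun w hw ↦ ?_
  cases isEmpty_or_nonempty V
  · rw [Fintype.card_eq_zero, Nat.cast_zero] at hs
    simpa using nonpos_of_mul_nonpos_right hs (by positivity)
  · exact hw.le_sum_of_link hE hs₀ hs hlink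

end Hypergraph

/-- Let `G` be a 3-graph on an `n`-element vertex set. Suppose that for every
vertex `v`, the link graph `L(v)` contains a fractional matching of size at least `n/3`.
Then `G` has a perfect fractional matching, i.e. a fractional matching of size `n/3`. -/
theorem stmt_1 {V : Type*} [Fintype V] [DecidableEq V] (n : ℕ)
    (hn : Fintype.card V = n)
    (E : Finset (Finset V)) (hE : ∀ e ∈ E, e.card = 3)
    (hlink : ∀ v : V, ∃ ω : Finset V → ℝ,
      (∀ p, 0 ≤ ω p) ∧ (∀ p, ω p ≤ 1) ∧
      (∀ x : V, x ≠ v →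
        ∑ p ∈ (Finset.univ.powersetCard 2).filter
            (fun p => v ∉ p ∧ insert v p ∈ E ∧ x ∈ p), ω p ≤ 1) ∧
      (n : ℝ) / 3 ≤ ∑ p ∈ (Finset.univ.powersetCard 2).filter
            (fun p => v ∉ p ∧ insert v p ∈ E), ω p) :
    ∃ ω : Finset V → ℝ,
      (∀ e, 0 ≤ ω e) ∧ (∀ e, ω e ≤ 1) ∧
      (∀ v : V, ∑ e ∈ E.filter (fun e => v ∈ e), ω e ≤ 1) ∧
      ∑ e ∈ E, ω e = (n : ℝ) / 3 := by
  obtain ⟨ω, hω, hsize⟩ := stmt_1_general three_ne_zero (fun e ↦ hE e)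
    (show 0 ≤ (n : ℝ) / 3 by positivity) (by rw [hn]; push_cast; linarith)
    fun v ↦ exists_isFractionalMatching_memberSubfamily (k := 2) (fun e ↦ hE e) (hlink v)
  exact ⟨ω, hω.nonneg, hω.le_one, hω.sum_le_one, hsize⟩
end

section
/- For every ε > 0 there exists n0 such that the following holds for every n ≥ n0. Let L be a simple graph on n vertices with at least (5/9 + ε)·binom(n,2) edges, and let C be a connected component of L containing the maximum number of edges among all connected components of L. Then the number of edges of L with both endpoints in C is strictly greater than (4/9)·binom(n,2). -/
/-- The set of edges of `G` with both endpoints in the connected component `C`. -/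
def compEdges {V : Type*} (G : SimpleGraph V) (C : G.ConnectedComponent) : Set (Sym2 V) :=
  {e | e ∈ G.edgeSet ∧ ∀ x ∈ e, G.connectedComponentMk x = C}

/-!
Let `D` be a component of largest order, with `a` of the `n` vertices, and put `b = n - a`. Every
vertex has degree at most `a - 1`, and a vertex outside `D` also has degree at most `b - 1`, as its
component avoids `D`. Suppose every component spans at most `α² * n.choose 2` edges, where
`1/2 ≤ α < 1`. If `αn ≤ a`, add the at most `b.choose 2` edges outside `D` to those of `D`; if
`(1 - α)n ≤ a ≤ αn`, the graph has at most `a.choose 2 + b.choose 2` edges; if `a ≤ (1 - α)n`, it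
has at most `n(a - 1)/2`. Each bound lies below `(α² + (1 - α)²) * n.choose 2`, and `α = 2/3` gives
the constants `4/9` and `5/9`.
-/

open Finset

section ComponentDegrees

variable {V : Type*} [Fintype V] {G : SimpleGraph V} [DecidableRel G.Adj]

lemma ncard_compEdges [DecidableEq V] (C : G.ConnectedComponent) :
    (compEdges G C).ncard = #(G.induce C.supp).edgeFinset := by
  have hedges : compEdges G C = ↑(G.edgeFinset ∩ C.supp.toFinset.sym2) := by
    ext ⟨x, y⟩
    simp [compEdges]
  rw [hedges, Set.ncard_coe_finset, ← SimpleGraph.map_edgeFinset_induce, card_map]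

lemma sum_degree_supp [DecidableEq V] (C : G.ConnectedComponent) :
    ∑ v ∈ C.supp.toFinset, G.degree v = 2 * (compEdges G C).ncard := by
  rw [ncard_compEdges, ← SimpleGraph.sum_degrees_eq_twice_card_edges,
    Finset.sum_subtype (p := (· ∈ C.supp)) _ (fun _ ↦ Set.mem_toFinset)]
  refine Fintype.sum_congr _ _ fun v ↦ (SimpleGraph.degree_induce_of_neighborSet_subset ?_).symm
  exact fun w hvw ↦ C.mem_supp_of_adj_mem_supp v.2 hvw

lemma degree_lt_ncard_supp (v : V) : G.degree v < (G.connectedComponentMk v).supp.ncard := by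
  rw [← G.card_neighborFinset_eq_degree, ← Set.ncard_coe_finset, G.coe_neighborFinset]
  refine Set.ncard_lt_ncard ⟨fun w hvw ↦ ?_, fun h ↦ G.notMem_neighborSet_self (h rfl)⟩
  exact SimpleGraph.ConnectedComponent.mem_supp_of_adj_mem_supp _ rfl hvw

lemma sum_degree_le_card_mul {s : Finset V} {k : ℕ}
    (hs : ∀ v ∈ s, (G.connectedComponentMk v).supp.ncard ≤ k) :
    ((∑ v ∈ s, G.degree v : ℕ) : ℝ) ≤ #s * ((k : ℝ) - 1) := by
  rw [Nat.cast_sum, ← nsmul_eq_mul]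
  refine sum_le_card_nsmul _ _ _ fun v hv ↦ le_sub_iff_add_le.mpr ?_
  exact_mod_cast (degree_lt_ncard_supp v).trans_le (hs v hv)

lemma sum_degree_compl_supp_le [DecidableEq V] (C : G.ConnectedComponent) :
    ((∑ v ∈ C.supp.toFinsetᶜ, G.degree v : ℕ) : ℝ)
      ≤ #C.supp.toFinsetᶜ * ((#C.supp.toFinsetᶜ : ℝ) - 1) := by
  refine sum_degree_le_card_mul fun v hv ↦ ?_
  rw [← Set.ncard_coe_finset, coe_compl, Set.coe_toFinset]
  have hvC : G.connectedComponentMk v ≠ C := by simpa using hv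
  exact Set.ncard_le_ncard (G.pairwise_disjoint_supp_connectedComponent hvC).subset_compl_right

end ComponentDegrees

lemma mul_sub_one_lt_sq_mul {β n b : ℝ} (hβ : 0 < β) (hβ1 : β < 1) (hn : 1 < n) (hb : 0 ≤ b)
    (hbn : b ≤ β * n) : b * (b - 1) < β ^ 2 * (n * (n - 1)) := by
  have hb_sub : b * (b - 1) ≤ b * (β * n - 1) := by gcongr
  rcases le_total 1 (β * n) with h | h
  · calc b * (b - 1) ≤ b * (β * n - 1) := hb_sub
      _ ≤ β * n * (β * n - 1) := by gcongr
      _ < β * n * (β * n - β) := by gcongr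
      _ = β ^ 2 * (n * (n - 1)) := by ring
  · calc b * (b - 1) ≤ b * (β * n - 1) := hb_sub
      _ ≤ 0 := mul_nonpos_of_nonneg_of_nonpos hb (by linarith)
      _ < β ^ 2 * (n * (n - 1)) := by
        have : 0 < n - 1 := sub_pos.mpr hn
        positivity

-- `A` and `B` stand for the degree sums inside and outside a component of largest order, and `a`
-- and `b` for the numbers of vertices there.
lemma add_lt_sq_add_sq_mul {α a b A B : ℝ} (hα : 1 / 2 ≤ α) (hα1 : α < 1) (hb : 0 ≤ b)
    (hn : 1 < a + b) (hAa : A ≤ a * (a - 1)) (hBa : B ≤ b * (a - 1)) (hBb : B ≤ b * (b - 1))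
    (hA : A ≤ α ^ 2 * ((a + b) * (a + b - 1))) :
    A + B < (α ^ 2 + (1 - α) ^ 2) * ((a + b) * (a + b - 1)) := by
  obtain ⟨n, rfl⟩ : ∃ n, a = n - b := ⟨a + b, by ring⟩
  simp only [sub_add_cancel] at *
  have hcoeff : α ^ 2 + (1 - α) ^ 2 < 1 := by nlinarith
  have hslack : (α ^ 2 + (1 - α) ^ 2) * n ^ 2 - n < (α ^ 2 + (1 - α) ^ 2) * (n * (n - 1)) := by
    nlinarith
  rcases le_total b ((1 - α) * n) with hb_small | hb_large
  · have hout : b * (b - 1) < (1 - α) ^ 2 * (n * (n - 1)) :=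
      mul_sub_one_lt_sq_mul (by linarith) (by linarith) hn hb hb_small
    linarith
  rcases le_total b (α * n) with hb_mid | hb_big
  · calc A + B ≤ (n - b) * (n - b - 1) + b * (b - 1) := add_le_add hAa hBb
      _ = (α ^ 2 + (1 - α) ^ 2) * n ^ 2 - n - 2 * ((b - (1 - α) * n) * (α * n - b)) := by ring
      _ ≤ (α ^ 2 + (1 - α) ^ 2) * n ^ 2 - n := by
        have := mul_nonneg (sub_nonneg.mpr hb_large) (sub_nonneg.mpr hb_mid)
        linarith
      _ < _ := hslack
  · have hone_sub : 1 - α ≤ α ^ 2 + (1 - α) ^ 2 := by nlinarith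
    calc A + B ≤ (n - b) * (n - b - 1) + b * (n - b - 1) := add_le_add hAa hBa
      _ = n * (n - b) - n := by ring
      _ ≤ n * ((1 - α) * n) - n := by gcongr; linarith
      _ = (1 - α) * n ^ 2 - n := by ring
      _ ≤ (α ^ 2 + (1 - α) ^ 2) * n ^ 2 - n := by gcongr
      _ < _ := hslack

theorem stmt_2_general {α : ℝ} (hα : 1 / 2 ≤ α) (hα1 : α < 1) {V : Type*} [Fintype V]
    [Nontrivial V] (G : SimpleGraph V) [DecidableRel G.Adj]
    (hG : (α ^ 2 + (1 - α) ^ 2) * ((Fintype.card V).choose 2 : ℝ) ≤ (#G.edgeFinset : ℝ))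
    (C : G.ConnectedComponent)
    (hC : ∀ D : G.ConnectedComponent, (compEdges G D).ncard ≤ (compEdges G C).ncard) :
    α ^ 2 * ((Fintype.card V).choose 2 : ℝ) < ((compEdges G C).ncard : ℝ) := by
  classical
  by_contra! hfew
  obtain ⟨D, hD⟩ := Finite.exists_max fun D : G.ConnectedComponent ↦ D.supp.ncard
  set s := D.supp.toFinset
  have hcard : #s = D.supp.ncard := (Set.ncard_eq_toFinset_card' _).symm
  have horder : (#s : ℝ) + #sᶜ = Fintype.card V := by exact_mod_cast card_add_card_compl s
  have hinside : ((∑ v ∈ s, G.degree v : ℕ) : ℝ) ≤ #s * ((#s : ℝ) - 1) :=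
    sum_degree_le_card_mul fun v _ ↦ hcard ▸ hD _
  have houtside : ((∑ v ∈ sᶜ, G.degree v : ℕ) : ℝ) ≤ #sᶜ * ((#s : ℝ) - 1) :=
    sum_degree_le_card_mul fun v _ ↦ hcard ▸ hD _
  have houtside' : ((∑ v ∈ sᶜ, G.degree v : ℕ) : ℝ) ≤ #sᶜ * ((#sᶜ : ℝ) - 1) :=
    sum_degree_compl_supp_le D
  have hsum : ((∑ v ∈ s, G.degree v : ℕ) : ℝ) + (∑ v ∈ sᶜ, G.degree v : ℕ)
      = 2 * #G.edgeFinset := by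
    exact_mod_cast (sum_add_sum_compl s _).trans G.sum_degrees_eq_twice_card_edges
  rw [Nat.cast_choose_two, ← horder] at hG hfew
  have hDfew : ((∑ v ∈ s, G.degree v : ℕ) : ℝ)
      ≤ α ^ 2 * ((#s + #sᶜ : ℝ) * (#s + #sᶜ - 1)) := by
    have hDC : ((compEdges G D).ncard : ℝ) ≤ (compEdges G C).ncard := by exact_mod_cast hC D
    rw [sum_degree_supp]
    push_cast
    linarith
  have hn : (1 : ℝ) < #s + #sᶜ := by
    rw [horder]
    exact_mod_cast Fintype.one_lt_card
  have := add_lt_sq_add_sq_mul hα hα1 (Nat.cast_nonneg _) hn hinside houtside houtside' hDfew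
  linarith

/-- For every `ε > 0` there exists `n0` such that for every `n ≥ n0`, if `L`
is a simple graph on `n` vertices with at least `(5/9 + ε)·C(n,2)` edges and `C` is a connected
component of `L` with the maximum number of edges among all components, then the number of
edges of `L` with both endpoints in `C` is strictly greater than `(4/9)·C(n,2)`. -/
theorem stmt_2 (ε : ℝ) (hε : 0 < ε) : ∃ n0 : ℕ, ∀ n : ℕ, n0 ≤ n →
    ∀ (V : Type) [Fintype V] [DecidableEq V], Fintype.card V = n →
    ∀ (G : SimpleGraph V) [DecidableRel G.Adj],
      (5/9 + ε) * (n.choose 2 : ℝ) ≤ (G.edgeFinset.card : ℝ) →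
      ∀ C : G.ConnectedComponent,
        (∀ D : G.ConnectedComponent, (compEdges G D).ncard ≤ (compEdges G C).ncard) →
        (4/9 : ℝ) * (n.choose 2 : ℝ) < ((compEdges G C).ncard : ℝ) := by
  refine ⟨2, ?_⟩
  rintro _ hn V _ _ rfl G _ hG C hC
  have : Nontrivial V := Fintype.one_lt_card_iff_nontrivial.mp hn
  have hslack : 0 ≤ ε * ((Fintype.card V).choose 2 : ℝ) := by positivity
  linarith [stmt_2_general (α := 2 / 3) (by norm_num) (by norm_num) G (by linarith) C hC]
end

section
/- For every ε > 0 there exists n0 such that the following holds for every n ≥ n0. Let L be a simple graph on n vertices with at least (5/9 + ε)·binom(n,2) edges, and let C be a connected component of L containing the maximum number of edges among all connected components of L. Then L has a matching consisting of at least n/3 pairwise disjoint edges, all of whose edges have both endpoints in C. -/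
/-!
The component `C` is dense enough for the Erdős–Gallai theorem to apply. That theorem is proved by
induction on the matching number. If some vertex is covered by every maximum matching, deleting it
lowers the matching number by one. Otherwise, by an exchange argument of Gallai, every vertex has at
most one neighbour outside the `2s` vertices covered by a fixed maximum matching, so contracting the
uncovered vertices to a single one loses no edge and there are at most `(2s+1).choose 2` edges.

Let `m` be the order of `C` and `n` the order of the graph. As `C` is the heaviest component, the
average degree of the graph is at most `m - 1`, which settles `m ≤ n / 3`. Counting the edges inside
`C` and inside its complement settles `n / 3 ≤ m ≤ 2 n / 3`. For larger `m` the Erdős–Gallai bound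
for `C` with fewer than `n / 3` matching edges gives fewer than `5 / 9 * n.choose 2` edges in total.
-/

open Finset

theorem two_mul_choose_two (n : ℕ) : 2 * n.choose 2 = n * (n - 1) := by
  rw [Nat.choose_two_right, Nat.mul_div_cancel' (Nat.even_mul_pred_self n).two_dvd]

theorem ncard_le_choose_two_of_forall_mem {α : Type*} {A : Set (Sym2 α)} {S : Set α}
    (hS : S.Finite) (hA : ∀ e ∈ A, ¬e.IsDiag) (hAS : ∀ e ∈ A, ∀ x ∈ e, x ∈ S) :
    A.ncard ≤ S.ncard.choose 2 := by
  classical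
  lift S to Finset α using hS
  rw [Set.ncard_coe_finset, ← Sym2.card_image_offDiag, ← Set.ncard_coe_finset]
  refine Set.ncard_le_ncard (fun e he ↦ ?_) (Finset.finite_toSet _)
  induction e with
  | _ a b =>
    simp only [coe_image, Set.mem_image, mem_coe, mem_offDiag]
    exact ⟨(a, b), ⟨hAS _ he a (by simp), hAS _ he b (by simp), hA _ he⟩, rfl⟩

theorem ncard_edgeSet_le_choose_two_of_isVertexCover {V : Type*} {G : SimpleGraph V} {U : Finset V}
    (hcover : G.IsVertexCover U)
    (hunique : ∀ t ∈ U, ∀ u ∉ U, ∀ v ∉ U, G.Adj t u → G.Adj t v → u = v) :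
    G.edgeSet.ncard ≤ (#U + 1).choose 2 := by
  classical
  -- Contracting all vertices outside `U` to the single vertex `none` is injective on edges.
  let contract (v : V) : Option V := if v ∈ U then some v else none
  have hinj : Set.InjOn (Sym2.map contract) G.edgeSet := by
    rintro ⟨a, b⟩ (hab : G.Adj a b) ⟨c, d⟩ (hcd : G.Adj c d) h
    have := hcover hab
    have := hcover hcd
    have := hab.symm
    have := hcd.symm
    simp only [Sym2.map_mk, contract] at h
    grind
  rw [← hinj.ncard_image, ← card_insertNone, ← Set.ncard_coe_finset]
  apply ncard_le_choose_two_of_forall_mem (finite_toSet _)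
  · rintro _ ⟨⟨a, b⟩, (hab : G.Adj a b), rfl⟩
    have := hcover hab
    have := hab.ne
    simp only [Sym2.map_mk, Sym2.mk_isDiag_iff, contract]
    grind
  · rintro _ ⟨e, -, rfl⟩ x hx
    obtain ⟨v, -, rfl⟩ := Sym2.mem_map.1 hx
    by_cases hv : v ∈ U <;> simp [contract, hv]

theorem ncard_edgeSet_le_ncard_deleteIncidenceSet_add {V : Type*} {G : SimpleGraph V} {S : Set V}
    (hS : S.Finite) (hGS : G.support ⊆ S) (v : V) :
    G.edgeSet.ncard ≤ (G.deleteIncidenceSet v).edgeSet.ncard + (S \ {v}).ncard := by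
  have hinc : G.incidenceSet v ⊆ (fun w ↦ s(v, w)) '' (S \ {v}) := by
    intro e he
    obtain ⟨w, rfl⟩ := he.2
    exact ⟨w, ⟨hGS (G.mem_support.2 ⟨v, G.adj_symm he.1⟩), (G.ne_of_adj he.1).symm⟩, rfl⟩
  have hfin := hS.sdiff (t := {v})
  rw [SimpleGraph.edgeSet_deleteIncidenceSet]
  calc G.edgeSet.ncard
      ≤ (G.edgeSet \ G.incidenceSet v).ncard + (G.incidenceSet v).ncard :=
        Set.ncard_le_ncard_sdiff_add_ncard _ _ ((hfin.image _).subset hinc)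
    _ ≤ (G.edgeSet \ G.incidenceSet v).ncard + (S \ {v}).ncard :=
        Nat.add_le_add_left
          ((Set.ncard_le_ncard hinc (hfin.image _)).trans (Set.ncard_image_le hfin)) _

theorem max_choose_two_add_le (s p : ℕ) :
    max ((2 * s + 1).choose 2) (s.choose 2 + s * (p - s)) + p ≤
      max ((2 * (s + 1) + 1).choose 2) ((s + 1).choose 2 + (s + 1) * (p - s)) := by
  rw [← max_add_add_right]
  refine max_le ?_ (le_max_of_le_right ?_)
  · rcases le_total p (4 * s + 3) with hp | hp
    · refine le_max_of_le_left (Nat.cast_le (α := ℚ).1 ?_)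
      have : (p : ℚ) ≤ 4 * s + 3 := mod_cast hp
      push_cast [Nat.cast_choose_two]
      linarith
    · obtain ⟨q, rfl⟩ := Nat.exists_eq_add_of_le hp
      have hsub : 4 * s + 3 + q - s = 3 * s + 3 + q := by omega
      refine le_max_of_le_right (Nat.cast_le (α := ℚ).1 ?_)
      rw [hsub]
      push_cast [Nat.cast_choose_two]
      have : 0 ≤ (3 / 2 * s ^ 2 + 3 / 2 * s + s * q : ℚ) := by positivity
      linarith
  · have : (s + 1).choose 2 = s + s.choose 2 := by simp [Nat.choose_succ_succ' s 1]
    rw [add_one_mul]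
    omega

section EdgeMatching

variable {V : Type*} {G : SimpleGraph V} {M N : Finset (Sym2 V)} {e : Sym2 V} {t u v x y z : V}

/-- A matching of `G`, encoded as a finite set of pairwise disjoint edges so that matchings can be
counted and modified edge by edge. -/
structure IsEdgeMatching (G : SimpleGraph V) (M : Finset (Sym2 V)) : Prop where
  subset_edgeSet : (M : Set (Sym2 V)) ⊆ G.edgeSet
  notMem_of_ne : ∀ e ∈ M, ∀ f ∈ M, e ≠ f → ∀ x : V, x ∈ e → x ∉ f

/-- A matching of `G` with the largest possible number of edges. -/
structure IsMaximumEdgeMatching (G : SimpleGraph V) (M : Finset (Sym2 V)) : Prop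
    extends IsEdgeMatching G M where
  card_le : ∀ N, IsEdgeMatching G N → #N ≤ #M

/-- The vertices covered by a set of edges. -/
def coveredVerts [DecidableEq V] (M : Finset (Sym2 V)) : Finset V :=
  M.biUnion Sym2.toFinset

theorem IsEdgeMatching.mono {H : SimpleGraph V} (hM : IsEdgeMatching G M) (hGH : G ≤ H) :
    IsEdgeMatching H M :=
  ⟨hM.subset_edgeSet.trans (SimpleGraph.edgeSet_mono hGH), hM.notMem_of_ne⟩

theorem exists_isMaximumEdgeMatching [Finite V] (G : SimpleGraph V) :
    ∃ M, IsMaximumEdgeMatching G M := by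
  obtain ⟨M, hM, hmax⟩ := Set.exists_max_image {M | IsEdgeMatching G M} Finset.card
    (Set.toFinite _) ⟨∅, by simp, by simp⟩
  exact ⟨M, hM, hmax⟩

variable [DecidableEq V]

@[simp]
theorem mem_coveredVerts : v ∈ coveredVerts M ↔ ∃ e ∈ M, v ∈ e := by
  simp [coveredVerts]

theorem mem_coveredVerts_iff_exists_mk_mem : v ∈ coveredVerts M ↔ ∃ w, s(v, w) ∈ M := by
  simp only [mem_coveredVerts, Sym2.mem_iff_exists]
  grind

namespace IsEdgeMatching

omit [DecidableEq V] in
theorem eq_of_mem {f : Sym2 V} (hM : IsEdgeMatching G M) (he : e ∈ M) (hf : f ∈ M)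
    (hve : v ∈ e) (hvf : v ∈ f) : e = f :=
  of_not_not fun hne ↦ hM.notMem_of_ne e he f hf hne v hve hvf

theorem card_coveredVerts (hM : IsEdgeMatching G M) : #(coveredVerts M) = 2 * #M := by
  rw [coveredVerts, card_biUnion, sum_const_nat (m := 2), mul_comm]
  · exact fun e he ↦ Sym2.card_toFinset_of_not_isDiag e
      (G.not_isDiag_of_mem_edgeSet (hM.subset_edgeSet he))
  · intro e he f hf hne
    simpa [Function.onFun, disjoint_left] using hM.notMem_of_ne e he f hf hne

theorem erase (hM : IsEdgeMatching G M) (e : Sym2 V) : IsEdgeMatching G (M.erase e) where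
  subset_edgeSet := (coe_subset.2 (M.erase_subset e)).trans hM.subset_edgeSet
  notMem_of_ne a ha b hb := hM.notMem_of_ne a (mem_of_mem_erase ha) b (mem_of_mem_erase hb)

theorem insert (hM : IsEdgeMatching G M) (hxy : G.Adj x y) (hx : x ∉ coveredVerts M)
    (hy : y ∉ coveredVerts M) : IsEdgeMatching G (insert s(x, y) M) where
  subset_edgeSet := by
    rw [coe_insert, Set.insert_subset_iff]
    exact ⟨hxy, hM.subset_edgeSet⟩
  notMem_of_ne := by
    have hdisj : ∀ e ∈ M, ∀ v, v ∈ e → v ∉ s(x, y) := by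
      intro e he v hve hv
      rcases Sym2.mem_iff.1 hv with rfl | rfl
      exacts [hx (mem_coveredVerts.2 ⟨e, he, hve⟩), hy (mem_coveredVerts.2 ⟨e, he, hve⟩)]
    have := hM.notMem_of_ne
    grind

theorem notMem_coveredVerts_erase (hM : IsEdgeMatching G M) (he : e ∈ M) (hv : v ∈ e) :
    v ∉ coveredVerts (M.erase e) := by
  rw [mem_coveredVerts]
  rintro ⟨f, hf, hvf⟩
  exact ne_of_mem_erase hf (hM.eq_of_mem (mem_of_mem_erase hf) he hvf hv)

theorem of_deleteIncidenceSet (hM : IsEdgeMatching (G.deleteIncidenceSet v) M) :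
    IsEdgeMatching G M ∧ v ∉ coveredVerts M := by
  refine ⟨hM.mono (G.deleteIncidenceSet_le v), fun hv ↦ ?_⟩
  obtain ⟨w, hw⟩ := mem_coveredVerts_iff_exists_mk_mem.1 hv
  exact (SimpleGraph.deleteIncidenceSet_adj.1 (hM.subset_edgeSet hw)).2.1 rfl

theorem deleteIncidenceSet (hM : IsEdgeMatching G M) (hv : v ∉ coveredVerts M) :
    IsEdgeMatching (G.deleteIncidenceSet v) M where
  subset_edgeSet := by
    rw [SimpleGraph.edgeSet_deleteIncidenceSet]
    exact fun e he ↦ ⟨hM.subset_edgeSet he, fun h ↦ hv (mem_coveredVerts.2 ⟨e, he, h.2⟩)⟩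
  notMem_of_ne := hM.notMem_of_ne

end IsEdgeMatching

namespace IsMaximumEdgeMatching

theorem mem_coveredVerts_of_adj (hM : IsMaximumEdgeMatching G M) (hxy : G.Adj x y)
    (hx : x ∉ coveredVerts M) : y ∈ coveredVerts M := by
  by_contra hy
  have hxyM : s(x, y) ∉ M := fun h ↦ hx (mem_coveredVerts.2 ⟨_, h, Sym2.mem_mk_left x y⟩)
  have hle := hM.card_le _ (hM.insert hxy hx hy)
  rw [card_insert_of_notMem hxyM] at hle
  omega

theorem insert_erase (hM : IsMaximumEdgeMatching G M) (hxy : G.Adj x y)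
    (hx : x ∉ coveredVerts M) (hyz : s(y, z) ∈ M) :
    IsMaximumEdgeMatching G (insert s(x, y) (M.erase s(y, z))) := by
  have hx' : x ∉ coveredVerts (M.erase s(y, z)) := by
    simp only [mem_coveredVerts, mem_erase] at hx ⊢
    grind
  have hy' := hM.notMem_coveredVerts_erase hyz (Sym2.mem_mk_left y z)
  have hxyM : s(x, y) ∉ M.erase s(y, z) := fun h ↦
    hx' (mem_coveredVerts.2 ⟨_, h, Sym2.mem_mk_left x y⟩)
  refine ⟨(hM.erase _).insert hxy hx' hy', fun N hN ↦ ?_⟩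
  rw [card_insert_of_notMem hxyM, card_erase_add_one hyz]
  exact hM.card_le N hN

omit [DecidableEq V] in
theorem card_eq (hM : IsMaximumEdgeMatching G M) (hN : IsMaximumEdgeMatching G N) : #M = #N :=
  (hN.card_le M hM.toIsEdgeMatching).antisymm (hM.card_le N hN.toIsEdgeMatching)

theorem exists_mem_coveredVerts_sdiff_ne (hM : IsMaximumEdgeMatching G M)
    (hN : IsMaximumEdgeMatching G N) (huv : u ≠ v) (hu : u ∈ coveredVerts N \ coveredVerts M)
    (hv : v ∈ coveredVerts N \ coveredVerts M) (t : V) :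
    ∃ x ∈ coveredVerts M \ coveredVerts N, x ≠ t := by
  refine exists_mem_ne ?_ t
  have hcard : #(coveredVerts M) = #(coveredVerts N) := by
    rw [hM.card_coveredVerts, hN.card_coveredVerts, hM.card_eq hN]
  rw [card_sdiff_comm hcard]
  exact one_lt_card.2 ⟨u, hu, v, hv, huv⟩

theorem exists_sdiff_ssubset (hM : IsMaximumEdgeMatching G M) (hN : IsMaximumEdgeMatching G N)
    (ht : t ∉ coveredVerts N) (htu : G.Adj t u) (htv : G.Adj t v) (huv : u ≠ v)
    (hu : u ∉ coveredVerts M) (hv : v ∉ coveredVerts M) :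
    ∃ N', IsMaximumEdgeMatching G N' ∧ t ∉ coveredVerts N' ∧ M \ N' ⊂ M \ N := by
  obtain ⟨x, hx, hxt⟩ := hM.exists_mem_coveredVerts_sdiff_ne hN huv
    (mem_sdiff.2 ⟨hN.mem_coveredVerts_of_adj htu ht, hu⟩)
    (mem_sdiff.2 ⟨hN.mem_coveredVerts_of_adj htv ht, hv⟩) t
  obtain ⟨hxM, hxN⟩ := mem_sdiff.1 hx
  obtain ⟨y, hxyM⟩ := mem_coveredVerts_iff_exists_mk_mem.1 hxM
  have hxy : G.Adj x y := hM.subset_edgeSet hxyM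
  have hyN := hN.mem_coveredVerts_of_adj hxy hxN
  obtain ⟨z, hyzN⟩ := mem_coveredVerts_iff_exists_mk_mem.1 hyN
  have hxyN : s(x, y) ∉ N := fun h ↦ hxN (mem_coveredVerts_iff_exists_mk_mem.2 ⟨y, h⟩)
  have hyzM : s(y, z) ∉ M := fun h ↦
    hxyN (hM.eq_of_mem h hxyM (Sym2.mem_mk_left y z) (Sym2.mem_mk_right x y) ▸ hyzN)
  -- Replacing the edge of `N` at `y` by `xy ∈ M` brings `N` closer to `M`.
  refine ⟨_, hN.insert_erase hxy hxN hyzN, ?_, ?_⟩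
  · have : y ≠ t := ne_of_mem_of_not_mem hyN ht
    simp only [mem_coveredVerts, mem_insert, mem_erase] at ht ⊢
    grind
  · rw [ssubset_iff_of_subset (by grind)]
    exact ⟨s(x, y), by grind, by simp⟩

theorem eq_of_adj_of_notMem_coveredVerts (hM : IsMaximumEdgeMatching G M)
    (hN : IsMaximumEdgeMatching G N) (ht : t ∉ coveredVerts N) (htu : G.Adj t u)
    (htv : G.Adj t v) (hu : u ∉ coveredVerts M) (hv : v ∉ coveredVerts M) : u = v := by
  by_contra huv
  induction hD : M \ N using Finset.strongInduction generalizing N with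
  | H D ih =>
    obtain ⟨N', hN', ht', hlt⟩ := hM.exists_sdiff_ssubset hN ht htu htv huv hu hv
    exact ih _ (hD ▸ hlt) hN' ht' rfl

theorem ncard_edgeSet_le_choose_two (hM : IsMaximumEdgeMatching G M)
    (hmiss : ∀ v, ∃ N, IsMaximumEdgeMatching G N ∧ v ∉ coveredVerts N) :
    G.edgeSet.ncard ≤ (2 * #M + 1).choose 2 := by
  rw [← hM.card_coveredVerts]
  refine ncard_edgeSet_le_choose_two_of_isVertexCover
    (fun u v huv ↦ or_iff_not_imp_left.2 (hM.mem_coveredVerts_of_adj huv))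
    fun t _ u hu v hv htu htv ↦ ?_
  obtain ⟨N, hN, ht⟩ := hmiss t
  exact hM.eq_of_adj_of_notMem_coveredVerts hN ht htu htv hu hv

theorem deleteIncidenceSet_erase (hM : IsMaximumEdgeMatching G M)
    (hv : ∀ N, IsMaximumEdgeMatching G N → v ∈ coveredVerts N) (he : e ∈ M) (hve : v ∈ e) :
    IsMaximumEdgeMatching (G.deleteIncidenceSet v) (M.erase e) := by
  refine ⟨(hM.erase e).deleteIncidenceSet (hM.notMem_coveredVerts_erase he hve), fun N hN ↦ ?_⟩
  obtain ⟨hNG, hvN⟩ := hN.of_deleteIncidenceSet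
  have hlt : #N < #M := by
    by_contra! hMN
    exact hvN (hv N ⟨hNG, fun N' hN' ↦ (hM.card_le N' hN').trans hMN⟩)
  rw [card_erase_of_mem he]
  omega

omit [DecidableEq V] in
/-- The **Erdős–Gallai theorem** on the matching number. The truncated subtraction is harmless: the
first term dominates when `S` has fewer than `#M` elements. -/
theorem ncard_edgeSet_le_max {S : Set V} (hM : IsMaximumEdgeMatching G M) (hS : S.Finite)
    (hGS : G.support ⊆ S) :
    G.edgeSet.ncard ≤
      max ((2 * #M + 1).choose 2) ((#M).choose 2 + #M * (S.ncard - #M)) := by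
  classical
  induction M using Finset.strongInduction generalizing G S with
  | H M ih =>
    by_cases hmiss : ∀ v, ∃ N, IsMaximumEdgeMatching G N ∧ v ∉ coveredVerts N
    · exact le_max_of_le_left (hM.ncard_edgeSet_le_choose_two hmiss)
    push Not at hmiss
    obtain ⟨v, hv⟩ := hmiss
    obtain ⟨w, hvw⟩ := mem_coveredVerts_iff_exists_mk_mem.1 (hv M hM)
    have hvS : v ∈ S := hGS (G.mem_support.2 ⟨w, hM.subset_edgeSet hvw⟩)
    have hdelete := ih (M.erase s(v, w)) (erase_ssubset hvw)
      (hM.deleteIncidenceSet_erase hv hvw (Sym2.mem_mk_left v w)) (hS.sdiff (t := {v}))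
      ((G.support_deleteIncidenceSet_subset v).trans (Set.sdiff_subset_sdiff_left hGS))
    have hsub : S.ncard - #M = (S \ {v}).ncard - #(M.erase s(v, w)) := by
      rw [Set.ncard_sdiff_singleton_of_mem hvS, ← card_erase_add_one hvw]
      omega
    calc G.edgeSet.ncard
        ≤ (G.deleteIncidenceSet v).edgeSet.ncard + (S \ {v}).ncard :=
          ncard_edgeSet_le_ncard_deleteIncidenceSet_add hS hGS v
      _ ≤ _ := Nat.add_le_add_right hdelete _
      _ ≤ _ := max_choose_two_add_le _ _
      _ = _ := by rw [card_erase_add_one hvw, ← hsub]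

end IsMaximumEdgeMatching
end EdgeMatching

section Component

variable {V : Type*} (G : SimpleGraph V) (C : G.ConnectedComponent)

theorem edgeSet_fromEdgeSet_compEdges :
    (SimpleGraph.fromEdgeSet (compEdges G C)).edgeSet = compEdges G C := by
  rw [SimpleGraph.edgeSet_fromEdgeSet, sdiff_eq_left, Set.disjoint_left]
  exact fun e he ↦ G.not_isDiag_of_mem_edgeSet he.1

theorem support_fromEdgeSet_compEdges_subset :
    (SimpleGraph.fromEdgeSet (compEdges G C)).support ⊆ C.supp := by
  rintro v ⟨w, hvw⟩
  exact ((SimpleGraph.fromEdgeSet_adj _).1 hvw).1.2 v (Sym2.mem_mk_left v w)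

variable {G} in
theorem mem_compEdges_of_mem {e : Sym2 V} {v : V} (he : e ∈ G.edgeSet) (hv : v ∈ e) :
    e ∈ compEdges G (G.connectedComponentMk v) := by
  obtain ⟨w, rfl⟩ := hv
  have hvw : G.Adj v w := he
  refine ⟨he, fun x hx ↦ ?_⟩
  rcases Sym2.mem_iff.1 hx with rfl | rfl
  exacts [rfl, SimpleGraph.ConnectedComponent.sound hvw.symm.reachable]

theorem iUnion_compEdges : ⋃ D, compEdges G D = G.edgeSet := by
  refine Set.Subset.antisymm (Set.iUnion_subset fun D e he ↦ he.1) fun e he ↦ ?_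
  exact Set.mem_iUnion.2 ⟨_, mem_compEdges_of_mem he e.out_fst_mem⟩

variable [Finite V]

theorem ncard_compEdges_le_choose_two : (compEdges G C).ncard ≤ C.supp.ncard.choose 2 :=
  ncard_le_choose_two_of_forall_mem C.supp.toFinite
    (fun _ he ↦ G.not_isDiag_of_mem_edgeSet he.1) fun _ he ↦ he.2

theorem ncard_edgeSet_le_ncard_compEdges_add :
    G.edgeSet.ncard ≤ (compEdges G C).ncard + (Nat.card V - C.supp.ncard).choose 2 := by
  have hdiff : (G.edgeSet \ compEdges G C).ncard ≤ (C.suppᶜ.ncard).choose 2 := by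
    refine ncard_le_choose_two_of_forall_mem C.suppᶜ.toFinite
      (fun e he ↦ G.not_isDiag_of_mem_edgeSet he.1) fun e he x hx hxC ↦ he.2 ?_
    rw [← SimpleGraph.ConnectedComponent.mem_supp_iff C x |>.1 hxC]
    exact mem_compEdges_of_mem he.1 hx
  rw [← Set.ncard_compl, add_comm]
  exact (Set.ncard_le_ncard_sdiff_add_ncard _ _).trans (Nat.add_le_add_right hdiff _)

theorem sum_ncard_supp [Fintype G.ConnectedComponent] :
    ∑ D : G.ConnectedComponent, D.supp.ncard = Nat.card V := by
  classical
  have := Fintype.ofFinite V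
  simp_rw [Nat.card_eq_fintype_card, ← card_univ]
  rw [card_eq_sum_card_fiberwise (t := univ) (f := G.connectedComponentMk) (by simp)]
  refine sum_congr rfl fun D _ ↦ ?_
  rw [← Set.ncard_coe_finset]
  congr 1
  ext; simp

variable {G C}

theorem two_mul_ncard_compEdges_le
    (hC : ∀ D : G.ConnectedComponent, (compEdges G D).ncard ≤ (compEdges G C).ncard)
    (D : G.ConnectedComponent) :
    2 * (compEdges G D).ncard ≤ D.supp.ncard * (C.supp.ncard - 1) := by
  rcases le_total D.supp.ncard C.supp.ncard with hDC | hCD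
  · calc 2 * (compEdges G D).ncard
        ≤ 2 * D.supp.ncard.choose 2 := by gcongr; exact ncard_compEdges_le_choose_two G D
      _ = D.supp.ncard * (D.supp.ncard - 1) := two_mul_choose_two _
      _ ≤ D.supp.ncard * (C.supp.ncard - 1) := by gcongr
  · calc 2 * (compEdges G D).ncard
        ≤ 2 * (compEdges G C).ncard := Nat.mul_le_mul_left 2 (hC D)
      _ ≤ 2 * C.supp.ncard.choose 2 := by gcongr; exact ncard_compEdges_le_choose_two G C
      _ = C.supp.ncard * (C.supp.ncard - 1) := two_mul_choose_two _
      _ ≤ D.supp.ncard * (C.supp.ncard - 1) := by gcongr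

theorem two_mul_ncard_edgeSet_le
    (hC : ∀ D : G.ConnectedComponent, (compEdges G D).ncard ≤ (compEdges G C).ncard) :
    2 * G.edgeSet.ncard ≤ Nat.card V * (C.supp.ncard - 1) := by
  have := Fintype.ofFinite G.ConnectedComponent
  calc 2 * G.edgeSet.ncard
      = 2 * (⋃ D, compEdges G D).ncard := by rw [iUnion_compEdges]
    _ ≤ 2 * ∑ D, (compEdges G D).ncard := by gcongr; exact Set.ncard_iUnion_le_of_fintype _
    _ = ∑ D, 2 * (compEdges G D).ncard := mul_sum _ _ _
    _ ≤ ∑ D : G.ConnectedComponent, D.supp.ncard * (C.supp.ncard - 1) :=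
        sum_le_sum fun D _ ↦ two_mul_ncard_compEdges_le hC D
    _ = Nat.card V * (C.supp.ncard - 1) := by rw [← sum_mul, sum_ncard_supp]

end Component

section Density

variable {n m s e : ℝ}

theorem lt_five_ninths_of_small_order (hn : 1 ≤ n) (hm : 3 * m ≤ n) (he : 2 * e ≤ n * (m - 1)) :
    e < 5 / 9 * (n * (n - 1) / 2) := by
  have : n * (m - 1) ≤ n * (n / 3 - 1) := by gcongr; linarith
  nlinarith

theorem lt_five_ninths_of_medium_order (hn : 0 < n) (hm : n ≤ 3 * m) (hm' : 3 * m ≤ 2 * n)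
    (he : e ≤ m * (m - 1) / 2 + (n - m) * (n - m - 1) / 2) :
    e < 5 / 9 * (n * (n - 1) / 2) := by
  linarith [mul_nonneg (sub_nonneg.2 hm) (sub_nonneg.2 hm')]

theorem lt_five_ninths_of_clique_bound (hn : 3 ≤ n) (hs0 : 0 ≤ s) (hs : 3 * s + 1 ≤ n)
    (hm : 2 * n ≤ 3 * m) (hmn : m ≤ n)
    (he : e ≤ (2 * s + 1) * (2 * s) / 2 + (n - m) * (n - m - 1) / 2) :
    e < 5 / 9 * (n * (n - 1) / 2) := by
  have hs' : s ≤ (n - 1) / 3 := by linarith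
  have hclique : (2 * s + 1) * (2 * s) ≤ (2 * ((n - 1) / 3) + 1) * (2 * ((n - 1) / 3)) := by
    gcongr
    linarith
  have hrest : (n - m) * (n - m - 1) ≤ n / 3 * (n / 3 - 1) := by
    nlinarith [show n - m ≤ n / 3 by linarith]
  nlinarith

theorem lt_five_ninths_of_star_bound (hn : 1 < n) (hs : 3 * s + 1 ≤ n)
    (hm : 2 * n ≤ 3 * m) (hmn : m ≤ n)
    (he : e ≤ s * (s - 1) / 2 + s * (m - s) + (n - m) * (n - m - 1) / 2) :
    e < 5 / 9 * (n * (n - 1) / 2) := by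
  have hstar : s * (s - 1) + 2 * s * (m - s) ≤
      (n - 1) / 3 * ((n - 1) / 3 - 1) + 2 * ((n - 1) / 3) * (m - (n - 1) / 3) := by nlinarith
  -- The right-hand side is convex in `m`, hence at most its chord between `2 n / 3` and `n`.
  have hchord : 0 ≤ (n - m) * (3 * m - 2 * n) := mul_nonneg (sub_nonneg.2 hmn) (sub_nonneg.2 hm)
  nlinarith

end Density

theorem lt_five_ninths_choose_two {n m s e : ℕ} (hn : 1 < n) (hm : 0 < m) (hmn : m ≤ n)
    (hs : 3 * s < n) (havg : 2 * e ≤ n * (m - 1)) (hsplit : e ≤ m.choose 2 + (n - m).choose 2)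
    (hEG : e ≤ max ((2 * s + 1).choose 2) (s.choose 2 + s * (m - s)) + (n - m).choose 2) :
    (e : ℝ) < 5 / 9 * n.choose 2 := by
  have hnR : (1 : ℝ) < n := mod_cast hn
  have hmnR : (m : ℝ) ≤ n := mod_cast hmn
  have hsR : (3 * s + 1 : ℝ) ≤ n := mod_cast hs
  rw [Nat.cast_choose_two]
  rcases le_total (3 * m) n with hsmall | hsmall
  · have := Nat.cast_le (α := ℝ).2 havg
    push_cast [Nat.cast_sub hm] at this
    exact lt_five_ninths_of_small_order hnR.le (mod_cast hsmall) this
  rcases le_total (3 * m) (2 * n) with hmedium | hlarge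
  · have := Nat.cast_le (α := ℝ).2 hsplit
    push_cast [Nat.cast_choose_two, Nat.cast_sub hmn] at this
    exact lt_five_ninths_of_medium_order (by linarith) (mod_cast hsmall) (mod_cast hmedium) this
  rw [← max_add_add_right, le_max_iff] at hEG
  rcases hEG with hclique | hstar
  · obtain rfl | hn3 : n = 2 ∨ 3 ≤ n := by omega
    · obtain ⟨rfl, rfl⟩ : s = 0 ∧ m = 2 := by omega
      obtain rfl : e = 0 := by simpa using hclique
      norm_num
    · have := Nat.cast_le (α := ℝ).2 hclique
      push_cast [Nat.cast_choose_two, Nat.cast_sub hmn] at this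
      rw [add_sub_cancel_right] at this
      exact lt_five_ninths_of_clique_bound (mod_cast hn3) (by positivity) hsR (mod_cast hlarge)
        hmnR this
  · have hsm : s ≤ m := by omega
    have := Nat.cast_le (α := ℝ).2 hstar
    push_cast [Nat.cast_choose_two, Nat.cast_sub hmn, Nat.cast_sub hsm] at this
    exact lt_five_ninths_of_star_bound hnR hsR (mod_cast hlarge) hmnR this

theorem stmt_3_general {V : Type*} [Fintype V] [Nontrivial V] (G : SimpleGraph V)
    [Fintype G.edgeSet]
    (hE : (5 / 9 : ℝ) * ((Fintype.card V).choose 2 : ℝ) ≤ (G.edgeFinset.card : ℝ))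
    (C : G.ConnectedComponent)
    (hC : ∀ D : G.ConnectedComponent, (compEdges G D).ncard ≤ (compEdges G C).ncard) :
    ∃ M : Finset (Sym2 V),
      (↑M : Set (Sym2 V)) ⊆ compEdges G C ∧
      (∀ e ∈ M, ∀ f ∈ M, e ≠ f → ∀ x : V, x ∈ e → x ∉ f) ∧
      (Fintype.card V : ℝ) / 3 ≤ (M.card : ℝ) := by
  obtain ⟨M, hM⟩ := exists_isMaximumEdgeMatching (SimpleGraph.fromEdgeSet (compEdges G C))
  have hsub := hM.subset_edgeSet
  have hEG := hM.ncard_edgeSet_le_max C.supp.toFinite (support_fromEdgeSet_compEdges_subset G C)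
  rw [edgeSet_fromEdgeSet_compEdges] at hsub hEG
  refine ⟨M, hsub, hM.notMem_of_ne, ?_⟩
  by_contra! hlt
  have hM3 : 3 * #M < Nat.card V := by
    rw [Nat.card_eq_fintype_card, ← Nat.cast_lt (α := ℝ)]
    push_cast
    linarith
  have hout := ncard_edgeSet_le_ncard_compEdges_add G C
  have hlow := lt_five_ninths_choose_two Finite.one_lt_card
    ((Set.ncard_pos C.supp.toFinite).2 C.nonempty_supp) (Set.ncard_le_card C.supp) hM3
    (two_mul_ncard_edgeSet_le hC)
    (hout.trans (Nat.add_le_add_right (ncard_compEdges_le_choose_two G C) _))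
    (hout.trans (Nat.add_le_add_right hEG _))
  rw [Nat.card_eq_fintype_card, ← SimpleGraph.coe_edgeFinset, Set.ncard_coe_finset] at hlow
  exact hE.not_gt hlow

/-- For every `ε > 0` there exists `n0` such that for every `n ≥ n0`, if `L`
is a simple graph on `n` vertices with at least `(5/9 + ε)·C(n,2)` edges and `C` is a connected
component of `L` with the maximum number of edges among all components, then `L` has a matching
of at least `n/3` pairwise disjoint edges, all with both endpoints in `C`. -/
theorem stmt_3 (ε : ℝ) (hε : 0 < ε) : ∃ n0 : ℕ, ∀ n : ℕ, n0 ≤ n →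
    ∀ (V : Type) [Fintype V] [DecidableEq V], Fintype.card V = n →
    ∀ (G : SimpleGraph V) [DecidableRel G.Adj],
      (5/9 + ε) * (n.choose 2 : ℝ) ≤ (G.edgeFinset.card : ℝ) →
      ∀ C : G.ConnectedComponent,
        (∀ D : G.ConnectedComponent, (compEdges G D).ncard ≤ (compEdges G C).ncard) →
        ∃ M : Finset (Sym2 V),
          (↑M : Set (Sym2 V)) ⊆ compEdges G C ∧
          (∀ e ∈ M, ∀ f ∈ M, e ≠ f → ∀ x : V, x ∈ e → x ∉ f) ∧
          (n : ℝ) / 3 ≤ (M.card : ℝ) := by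
  refine ⟨2, fun n hn V _ _ hV G _ hE C hC ↦ ?_⟩
  subst hV
  have : Nontrivial V := Fintype.one_lt_card_iff_nontrivial.1 hn
  exact stmt_3_general G (hE.trans' (by gcongr; linarith)) C hC
end

section
/- Let 2 ≤ k ≤ t ≤ n and let G be a k-graph on n vertices with minimum codegree δ(G) > f_k(t)·n. Then for any D1, D2 ∈ K_{t−1}(G) with |D1 ∩ D2| = t−2, there exists a vertex v such that D1 ∪ {v} ∈ K_t(G) and D2 ∪ {v} ∈ K_t(G). -/
/-- `X` is an edge of the clique `j`-graph `K_j(G)` of the `k`-graph with edge set `E`: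
`X` has `j` vertices and every `k`-element subset of `X` is an edge. -/
def cliqueEdge {V : Type*} [DecidableEq V] (E : Finset (Finset V)) (k j : ℕ)
    (X : Finset V) : Prop :=
  X.card = j ∧ ∀ S ⊆ X, S.card = k → S ∈ E

/-!
A vertex `v` extends a clique `D` exactly when `S ∪ {v}` is an edge for every `(k - 1)`-subset `S`
of `D`. The two cliques have `M = C(t-1, k-1) + C(t-2, k-2)` such subsets between them, by
inclusion–exclusion and Pascal's rule, and each of these fails for fewer than `n / M` vertices `v`
by the codegree assumption. Fewer than `n` vertices are excluded altogether, so some `v` remains.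
-/

open Finset

section UnionBound

variable {ι α : Type*} {s : Finset ι} {t : Finset α} {P : ι → α → Prop} [∀ i, DecidablePred (P i)]

theorem exists_mem_forall_of_sum_card_filter_not_lt (h : ∑ i ∈ s, #{a ∈ t | ¬P i a} < #t) :
    ∃ a ∈ t, ∀ i ∈ s, P i a := by
  classical
  have excluded_lt : #(s.biUnion fun i ↦ {a ∈ t | ¬P i a}) < #t := card_biUnion_le.trans_lt h
  obtain ⟨a, hat, ha⟩ := exists_mem_notMem_of_card_lt_card excluded_lt
  refine ⟨a, hat, fun i hi ↦ ?_⟩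
  by_contra hPi
  exact ha (mem_biUnion.2 ⟨i, hi, mem_filter.2 ⟨hat, hPi⟩⟩)

theorem exists_mem_forall_of_lt_card_filter {𝕜 : Type*} [Field 𝕜] [LinearOrder 𝕜]
    [IsStrictOrderedRing 𝕜] (hs : s.Nonempty)
    (h : ∀ i ∈ s, (1 - 1 / (#s : 𝕜)) * #t < #{a ∈ t | P i a}) :
    ∃ a ∈ t, ∀ i ∈ s, P i a := by
  apply exists_mem_forall_of_sum_card_filter_not_lt
  have card_not_lt : ∀ i ∈ s, (#{a ∈ t | ¬P i a} : 𝕜) < #t / #s := by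
    intro i hi
    have hsplit : (#{a ∈ t | P i a} : 𝕜) + #{a ∈ t | ¬P i a} = #t :=
      mod_cast card_filter_add_card_filter_not (s := t) (P i)
    linear_combination h i hi + hsplit
  have sum_lt : ∑ i ∈ s, (#{a ∈ t | ¬P i a} : 𝕜) < #t :=
    calc
      _ < ∑ _i ∈ s, (#t / #s : 𝕜) := sum_lt_sum_of_nonempty hs card_not_lt
      _ = #t := by
        rw [sum_const, nsmul_eq_mul, mul_div_cancel₀ _ (Nat.cast_ne_zero.2 hs.card_ne_zero)]
  exact_mod_cast sum_lt

end UnionBound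

section PowersetCard

variable {α : Type*} [DecidableEq α]

theorem powersetCard_inter (r : ℕ) (A B : Finset α) :
    (A ∩ B).powersetCard r = A.powersetCard r ∩ B.powersetCard r := by
  ext S
  simp only [mem_inter, mem_powersetCard, subset_inter_iff]
  tauto

theorem card_powersetCard_union_powersetCard {m : ℕ} (r : ℕ) {A B : Finset α}
    (hA : #A = m + 1) (hB : #B = m + 1) (hAB : #(A ∩ B) = m) :
    #(A.powersetCard (r + 1) ∪ B.powersetCard (r + 1)) =
      (m + 1).choose (r + 1) + m.choose r := by
  have inclusion_exclusion :=
    card_union_add_card_inter (A.powersetCard (r + 1)) (B.powersetCard (r + 1))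
  rw [← powersetCard_inter] at inclusion_exclusion
  simp only [card_powersetCard, hA, hB, hAB] at inclusion_exclusion
  have pascal := Nat.choose_succ_succ' m r
  omega

end PowersetCard

section Hypergraph

variable {V : Type*} [DecidableEq V] {E : Finset (Finset V)}

theorem notMem_of_insert_mem {S : Finset V} (hE : (E : Set (Finset V)).Sized (#S + 1)) {v : V}
    (hv : insert v S ∈ E) : v ∉ S := by
  intro hvS
  have hcard := hE hv
  rw [insert_eq_of_mem hvS] at hcard
  omega

theorem card_filter_superset_eq_card_filter_insert_mem [Fintype V] {S : Finset V}
    (hE : (E : Set (Finset V)).Sized (#S + 1)) :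
    #{e ∈ E | S ⊆ e} = #{v | insert v S ∈ E} := by
  have image_eq : ({v | insert v S ∈ E} : Finset V).image (insert · S) = {e ∈ E | S ⊆ e} := by
    ext e
    simp only [mem_image, mem_filter, mem_univ, true_and]
    constructor
    · rintro ⟨v, hv, rfl⟩
      exact ⟨hv, subset_insert v S⟩
    · rintro ⟨he, hSe⟩
      obtain ⟨v, -, rfl⟩ := exists_eq_insert_iff.2 ⟨hSe, (hE he).symm⟩
      exact ⟨v, he, rfl⟩
  rw [← image_eq, card_image_of_injOn]
  intro v hv w _ hvw
  exact (insert_inj (notMem_of_insert_mem hE (mem_filter.1 hv).2)).1 hvw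

namespace cliqueEdge

variable {r j : ℕ} {D : Finset V} {v : V}

theorem insert_of_notMem (hD : cliqueEdge E (r + 1) j D) (hvD : v ∉ D)
    (hv : ∀ S ∈ D.powersetCard r, insert v S ∈ E) :
    cliqueEdge E (r + 1) (j + 1) (insert v D) := by
  refine ⟨by rw [card_insert_of_notMem hvD, hD.1], fun T hT hTcard ↦ ?_⟩
  by_cases hvT : v ∈ T
  · have erase_mem : T.erase v ∈ D.powersetCard r :=
      mem_powersetCard.2 ⟨subset_insert_iff.1 hT,
        by rw [card_erase_of_mem hvT, hTcard, Nat.add_sub_cancel]⟩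
    simpa only [insert_erase hvT] using hv _ erase_mem
  · exact hD.2 T ((subset_insert_iff_of_notMem hvT).1 hT) hTcard

theorem insert_of_sized (hD : cliqueEdge E (r + 1) j D)
    (hE : (E : Set (Finset V)).Sized (r + 1)) (hr : 1 ≤ r) (hrj : r ≤ j)
    (hv : ∀ S ∈ D.powersetCard r, insert v S ∈ E) :
    cliqueEdge E (r + 1) (j + 1) (insert v D) := by
  refine hD.insert_of_notMem (fun hvD ↦ ?_) hv
  obtain ⟨S, hvS, hSD, rfl⟩ :=
    exists_subsuperset_card_eq (singleton_subset_iff.2 hvD) (by simpa using hr)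
      (hrj.trans_eq hD.1.symm)
  exact notMem_of_insert_mem hE (hv S (mem_powersetCard.2 ⟨hSD, rfl⟩)) (singleton_subset_iff.1 hvS)

theorem exists_forall_insert [Fintype V] {𝒟 : Finset (Finset V)} (h𝒟 : 𝒟.Nonempty)
    (hclique : ∀ D ∈ 𝒟, cliqueEdge E (r + 1) j D)
    (hE : (E : Set (Finset V)).Sized (r + 1)) (hr : 1 ≤ r) (hrj : r ≤ j)
    (hdeg : ∀ S ∈ 𝒟.biUnion (powersetCard r),
      (1 - 1 / (#(𝒟.biUnion (powersetCard r)) : ℝ)) * Fintype.card V < #{e ∈ E | S ⊆ e}) :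
    ∃ v, ∀ D ∈ 𝒟, cliqueEdge E (r + 1) (j + 1) (insert v D) := by
  have nonempty : (𝒟.biUnion (powersetCard r)).Nonempty :=
    h𝒟.biUnion fun D hD ↦ powersetCard_nonempty.2 (hrj.trans_eq (hclique D hD).1.symm)
  obtain ⟨v, -, hv⟩ : ∃ v ∈ univ, ∀ S ∈ 𝒟.biUnion (powersetCard r), insert v S ∈ E := by
    refine exists_mem_forall_of_lt_card_filter (𝕜 := ℝ) nonempty fun S hS ↦ ?_
    obtain ⟨D, -, hSD⟩ := mem_biUnion.1 hS
    obtain rfl : #S = r := (mem_powersetCard.1 hSD).2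
    rw [card_univ, ← card_filter_superset_eq_card_filter_insert_mem hE]
    exact hdeg S hS
  exact ⟨v, fun D hD ↦ (hclique D hD).insert_of_sized hE hr hrj fun S hS ↦
    hv S (mem_biUnion.2 ⟨D, hD, hS⟩)⟩

end cliqueEdge

end Hypergraph

/-- Let `2 ≤ k ≤ t ≤ n` and let `G` be a `k`-graph on `n` vertices with
minimum codegree `δ(G) > f_k(t)·n` where `f_k(t) = 1 − 1/(C(t−1,k−1) + C(t−2,k−2))`.
Then for any `D1, D2 ∈ K_{t−1}(G)` with `|D1 ∩ D2| = t−2`, there exists a vertex `v` such that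
`D1 ∪ {v} ∈ K_t(G)` and `D2 ∪ {v} ∈ K_t(G)`. -/
theorem stmt_6 {V : Type*} [Fintype V] [DecidableEq V] (n k t : ℕ)
    (hk : 2 ≤ k) (hkt : k ≤ t) (htn : t ≤ n) (hn : Fintype.card V = n)
    (E : Finset (Finset V)) (hE : ∀ e ∈ E, e.card = k)
    (hdeg : ∀ D : Finset V, D.card = k - 1 →
      (1 - 1 / (((t-1).choose (k-1) : ℝ) + ((t-2).choose (k-2) : ℝ))) * n
        < ((E.filter (fun e => D ⊆ e)).card : ℝ))
    (D1 D2 : Finset V)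
    (hD1 : cliqueEdge E k (t-1) D1) (hD2 : cliqueEdge E k (t-1) D2)
    (hint : (D1 ∩ D2).card = t - 2) :
    ∃ v : V, cliqueEdge E k t (insert v D1) ∧ cliqueEdge E k t (insert v D2) := by
  subst hn
  obtain ⟨r, rfl⟩ : ∃ r, k = r + 2 := Nat.exists_eq_add_of_le' hk
  obtain ⟨m, rfl⟩ : ∃ m, t = m + 2 := Nat.exists_eq_add_of_le' (hk.trans hkt)
  have card_subsets : #(({D1, D2} : Finset (Finset V)).biUnion (powersetCard (r + 1))) =
      (m + 1).choose (r + 1) + m.choose r := by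
    rw [biUnion_insert, singleton_biUnion]
    exact card_powersetCard_union_powersetCard r hD1.1 hD2.1 hint
  obtain ⟨v, hv⟩ : ∃ v, ∀ D ∈ ({D1, D2} : Finset (Finset V)),
      cliqueEdge E (r + 2) (m + 2) (insert v D) := by
    refine cliqueEdge.exists_forall_insert (insert_nonempty _ _) (by simpa using ⟨hD1, hD2⟩) hE
      (by omega) (by omega) fun S hS ↦ ?_
    obtain ⟨D, -, hSD⟩ := mem_biUnion.1 hS
    rw [card_subsets, Nat.cast_add]
    exact hdeg S (mem_powersetCard.1 hSD).2
  exact ⟨v, hv D1 (by simp), hv D2 (by simp)⟩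
end

section
/- Let 2 ≤ k ≤ t ≤ n and let G be a k-graph on n vertices with minimum codegree δ(G) > f_k(t)·n. Then K_t(G) contains a closed tight walk whose order is congruent to −1 modulo t: there exist an integer m ≥ t with m ≡ t−1 (mod t) and a function w : ℤ/mℤ → V such that for every i ∈ ℤ/mℤ the vertices w(i), w(i+1), …, w(i+t−1) are pairwise distinct and {w(i), …, w(i+t−1)} is an edge of K_t(G). -/
/-!
The codegree condition says that any `binom(t-1, k-1) + binom(t-2, k-2)` sets of `k - 1` vertices
have a common neighbour. Hence `t`-cliques exist, and for an ordered `t`-clique `f` and two of its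
positions there is a vertex `v` that may replace the entry of `f` in either position. Three such
replacements transpose the two entries (`v` is the temporary variable of a swap), so every
reordering of `f` is reached through ordered cliques that differ in one entry at each step.

Concatenating ordered cliques, where consecutive ones differ in at most one entry, gives a tight
walk in `K_t(G)`. Going from `f` to its rotation by one in this way takes a multiple of `t` steps.
Rotating on through `2t - 1` more entries, which only repeats vertices of `f`, returns to `f`, and
the closed walk has order `-1` modulo `t`.
-/

open Finset

section CommonNeighbors

variable {V : Type*}

lemma exists_mem_forall_of_lt_card [Fintype V] [Nonempty V] {ι : Type*} {F : Finset ι}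
    {N : ι → Finset V} {M : ℕ} (hF : #F ≤ M)
    (hN : ∀ i ∈ F, (1 - 1 / (M : ℝ)) * Fintype.card V < #(N i)) :
    ∃ v, ∀ i ∈ F, v ∈ N i := by
  classical
  by_contra! hcover
  obtain ⟨i₀, hi₀, -⟩ := hcover (Classical.arbitrary V)
  have hM : (0 : ℝ) < M := by exact_mod_cast (card_pos.mpr ⟨i₀, hi₀⟩).trans_le hF
  have hcompl (i) (hi : i ∈ F) : (#(N i)ᶜ : ℝ) < Fintype.card V / M := by
    rw [card_compl, Nat.cast_sub (card_le_univ _)]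
    linarith [hN i hi, show (1 - 1 / (M : ℝ)) * Fintype.card V
      = Fintype.card V - Fintype.card V / M by ring]
  have huniv : (univ : Finset V) ⊆ F.biUnion fun i => (N i)ᶜ := fun v _ => by
    simpa using hcover v
  have hlt : (Fintype.card V : ℝ) < Fintype.card V :=
    calc (Fintype.card V : ℝ) ≤ ∑ i ∈ F, (#(N i)ᶜ : ℝ) :=
          mod_cast (card_le_card huniv).trans card_biUnion_le
      _ < ∑ _i ∈ F, (Fintype.card V / M : ℝ) := sum_lt_sum_of_nonempty ⟨i₀, hi₀⟩ hcompl
      _ = #F * (Fintype.card V / M : ℝ) := by rw [sum_const, nsmul_eq_mul]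
      _ ≤ M * (Fintype.card V / M : ℝ) := by gcongr
      _ = Fintype.card V := mul_div_cancel₀ _ hM.ne'
  exact hlt.false

variable [DecidableEq V] {E : Finset (Finset V)}

/-- The neighbourhood of a vertex set `D` in the hypergraph with edge set `E`: the vertices that
complete `D` to an edge. For a `k`-graph and `#D = k - 1` its size is the codegree of `D`. -/
def neighbors [Fintype V] (E : Finset (Finset V)) (D : Finset V) : Finset V :=
  {v | v ∉ D ∧ insert v D ∈ E}

lemma mem_neighbors [Fintype V] {D : Finset V} {v : V} :
    v ∈ neighbors E D ↔ v ∉ D ∧ insert v D ∈ E := by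
  simp [neighbors]

lemma card_filter_subset_le_card_neighbors [Fintype V] {D : Finset V}
    (hE : ∀ e ∈ E, #e = #D + 1) : #{e ∈ E | D ⊆ e} ≤ #(neighbors E D) := by
  refine (card_le_card fun e he => ?_).trans (card_image_le (f := fun v => insert v D))
  obtain ⟨he, hDe⟩ := mem_filter.mp he
  obtain ⟨v, hv, rfl⟩ := exists_eq_insert_iff.mpr ⟨hDe, (hE e he).symm⟩
  exact mem_image_of_mem _ (mem_neighbors.mpr ⟨hv, he⟩)

/-- Any `M` sets of `d` vertices have a common neighbour in the hypergraph with edge set `E`.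
This is the only consequence of the codegree condition that the construction uses. -/
def HasCommonNeighbors [Fintype V] (E : Finset (Finset V)) (d M : ℕ) : Prop :=
  ∀ F : Finset (Finset V), (∀ D ∈ F, #D = d) → #F ≤ M → ∃ v, ∀ D ∈ F, v ∈ neighbors E D

lemma hasCommonNeighbors_of_lt_codegree [Fintype V] [Nonempty V] {d M : ℕ}
    (hE : ∀ e ∈ E, #e = d + 1)
    (hdeg : ∀ D : Finset V, #D = d →
      (1 - 1 / (M : ℝ)) * Fintype.card V < #{e ∈ E | D ⊆ e}) :
    HasCommonNeighbors E d M := fun F hFd hFM =>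
  exists_mem_forall_of_lt_card hFM fun D hD => (hdeg D (hFd D hD)).trans_le <| by
    exact_mod_cast card_filter_subset_le_card_neighbors fun e he => by rw [hE e he, hFd D hD]

end CommonNeighbors

section CliqueExtension

variable {V : Type*} [DecidableEq V] {E : Finset (Finset V)} {d M s : ℕ}

lemma card_powersetCard_insert_union_le {A : Finset V} {x y : V} (hx : x ∉ A) (n : ℕ) :
    #(powersetCard (n + 1) (insert x A) ∪ powersetCard (n + 1) (insert y A)) ≤
      (#A + 1).choose (n + 1) + (#A).choose n := by
  have hunion : powersetCard (n + 1) (insert x A) ∪ powersetCard (n + 1) (insert y A) =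
      powersetCard (n + 1) (insert y A) ∪ (powersetCard n A).image (insert x) := by
    rw [powersetCard_succ_insert hx, union_right_comm,
      union_eq_right.mpr (powersetCard_mono (subset_insert y A))]
  calc _ ≤ #(powersetCard (n + 1) (insert y A)) + #((powersetCard n A).image (insert x)) :=
        hunion ▸ card_union_le _ _
    _ ≤ (#(insert y A)).choose (n + 1) + (#A).choose n := by
        rw [card_powersetCard]
        exact Nat.add_le_add_left (card_image_le.trans_eq (card_powersetCard _ _)) _
    _ ≤ _ := by gcongr; exact card_insert_le y A

variable [Fintype V]

lemma cliqueEdge.insert {X : Finset V} {v : V} (hX : cliqueEdge E (d + 1) s X) (hd : d ≠ 0)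
    (hds : d ≤ s) (hv : ∀ D ∈ powersetCard d X, v ∈ neighbors E D) :
    cliqueEdge E (d + 1) (s + 1) (insert v X) := by
  have hvX : v ∉ X := fun hvX => by
    obtain ⟨D, hvD, hDX, hD⟩ := exists_subsuperset_card_eq (singleton_subset_iff.mpr hvX)
      (by rw [card_singleton]; omega) (hds.trans_eq hX.1.symm)
    exact (mem_neighbors.mp (hv D (mem_powersetCard.mpr ⟨hDX, hD⟩))).1
      (singleton_subset_iff.mp hvD)
  refine ⟨by rw [card_insert_of_notMem hvX, hX.1], fun S hS hSd => ?_⟩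
  by_cases hvS : v ∈ S
  · have hSX : S.erase v ∈ powersetCard d X :=
      mem_powersetCard.mpr ⟨subset_insert_iff.mp hS, by rw [card_erase_of_mem hvS, hSd]; rfl⟩
    simpa only [insert_erase hvS] using (mem_neighbors.mp (hv _ hSX)).2
  · exact hX.2 S ((subset_insert_iff_of_notMem hvS).mp hS) hSd

lemma exists_cliqueEdge (hE : HasCommonNeighbors E d M) (hd : d ≠ 0) (hV : d ≤ Fintype.card V)
    (hds : d ≤ s) (hM : (s - 1).choose d ≤ M) : ∃ X, cliqueEdge E (d + 1) s X := by
  induction s, hds using Nat.le_induction with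
  | base =>
    obtain ⟨X, -, hX⟩ := exists_subset_card_eq (s := (univ : Finset V)) hV
    refine ⟨X, hX, fun S hS hSd => ?_⟩
    have := card_le_card hS
    omega
  | succ s hds ih =>
    obtain ⟨X, hX⟩ := ih ((Nat.choose_le_choose d (Nat.sub_le _ _)).trans hM)
    obtain ⟨v, hv⟩ := hE (powersetCard d X) (fun D hD => (mem_powersetCard.mp hD).2)
      (by rwa [card_powersetCard, hX.1])
    exact ⟨insert v X, hX.insert hd hds hv⟩

lemma exists_common_cliqueEdge_insert (hE : HasCommonNeighbors E d M) (hd : d ≠ 0)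
    {A : Finset V} {x y : V} (hx : x ∉ A) (hds : d ≤ s)
    (hM : s.choose d + (s - 1).choose (d - 1) ≤ M)
    (hAx : cliqueEdge E (d + 1) s (insert x A)) (hAy : cliqueEdge E (d + 1) s (insert y A)) :
    ∃ v, cliqueEdge E (d + 1) (s + 1) (insert v (insert x A)) ∧
      cliqueEdge E (d + 1) (s + 1) (insert v (insert y A)) := by
  obtain ⟨n, rfl⟩ := Nat.exists_eq_succ_of_ne_zero hd
  have hs : s = #A + 1 := by rw [← hAx.1, card_insert_of_notMem hx]
  obtain ⟨v, hv⟩ := hE (powersetCard (n + 1) (insert x A) ∪ powersetCard (n + 1) (insert y A))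
    (fun D hD => (mem_union.mp hD).elim (fun h => (mem_powersetCard.mp h).2)
      fun h => (mem_powersetCard.mp h).2)
    ((card_powersetCard_insert_union_le hx n).trans (by simpa [hs] using hM))
  exact ⟨v, hAx.insert hd hds fun D hD => hv D (mem_union_left _ hD),
    hAy.insert hd hds fun D hD => hv D (mem_union_right _ hD)⟩

end CliqueExtension

section CliqueTuples

/-- The set `P` of tuples is closed under reordering the entries of a tuple. -/
def PermInvariant {ι α : Type*} (P : Set (ι → α)) : Prop :=
  ∀ f ∈ P, ∀ σ : Equiv.Perm ι, f ∘ σ ∈ P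

variable {V : Type*} [DecidableEq V] {E : Finset (Finset V)} {k t : ℕ}

/-- The orderings of the edges of `K_t(G)`, where `G` is the `k`-graph with edge set `E`. Such a
tuple is injective because its image has `t` elements. -/
def cliqueTuples (E : Finset (Finset V)) (k t : ℕ) : Set (Fin t → V) :=
  {f | cliqueEdge E k t (univ.image f)}

lemma injective_of_mem_cliqueTuples {f : Fin t → V} (hf : f ∈ cliqueTuples E k t) :
    Function.Injective f :=
  Set.injOn_univ.mp (coe_univ (α := Fin t) ▸ card_image_iff.mp (hf.1.trans (card_fin t).symm))

lemma permInvariant_cliqueTuples (E : Finset (Finset V)) (k t : ℕ) :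
    PermInvariant (cliqueTuples E k t) := fun f hf σ => by
  rwa [cliqueTuples, Set.mem_ofPred_eq, ← image_image, image_univ_equiv]

lemma cliqueEdge.nonempty_cliqueTuples {X : Finset V} (hX : cliqueEdge E k t X) :
    (cliqueTuples E k t).Nonempty := by
  let e := X.equivFinOfCardEq hX.1
  have himage : univ.image (fun j => (e.symm j : V)) = X := by
    ext v
    simpa using (e.symm.surjective.exists (p := fun a : X => (a : V) = v)).symm
  exact ⟨_, himage ▸ hX⟩

lemma image_univ_update {ι : Type*} [Fintype ι] [DecidableEq ι] (f : ι → V) (i : ι) (v : V) :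
    univ.image (Function.update f i v) = insert v ((univ.erase i).image f) := by
  rw [← insert_erase (mem_univ i), image_insert, Function.update_self, insert_erase (mem_univ i)]
  congr 1
  exact image_congr fun a ha => Function.update_of_ne (ne_of_mem_erase ha) _ _

lemma exists_update_mem_cliqueTuples [Fintype V] {d M : ℕ} (hE : HasCommonNeighbors E d M)
    (hd : d ≠ 0) (hdt : d < t) (hM : (t - 1).choose d + (t - 2).choose (d - 1) ≤ M)
    {f : Fin t → V} (hf : f ∈ cliqueTuples E (d + 1) t) {i j : Fin t} (hij : i ≠ j) :
    ∃ v, Function.update f i v ∈ cliqueTuples E (d + 1) t ∧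
      Function.update f j v ∈ cliqueTuples E (d + 1) t := by
  obtain ⟨s, rfl⟩ : ∃ s, t = s + 1 := ⟨t - 1, by omega⟩
  have hinj := injective_of_mem_cliqueTuples hf
  set A := ((univ.erase i).erase j).image f with hA
  have hj : insert (f j) A = (univ.erase i).image f := by
    rw [hA, ← image_insert, insert_erase (by simp [hij.symm])]
  have hi : insert (f i) A = (univ.erase j).image f := by
    rw [hA, erase_right_comm, ← image_insert, insert_erase (by simp [hij])]
  have hjA : f j ∉ A := by simp [hA, hinj.eq_iff]
  have hclique (l : Fin (s + 1)) : cliqueEdge E (d + 1) s ((univ.erase l).image f) :=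
    ⟨by simp [card_image_of_injective _ hinj],
      fun S hS => hf.2 S (hS.trans (image_subset_image (erase_subset _ _)))⟩
  obtain ⟨v, hvj, hvi⟩ := exists_common_cliqueEdge_insert hE hd hjA
    (Nat.le_of_lt_succ hdt) hM (hj ▸ hclique i) (hi ▸ hclique j)
  rw [hj, ← image_univ_update] at hvj
  rw [hi, ← image_univ_update] at hvi
  exact ⟨v, hvj, hvi⟩

end CliqueTuples

section TightWalks

variable {V : Type*} {t : ℕ} [NeZero t] {P : Set (Fin t → V)}

/-- The shift relation on `t`-tuples, restricted to those that start in `P`: drop the first entry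
and append an arbitrary last one. The successive `t`-windows of a tight walk form a walk for this
relation. The condition `j + 1 ≠ 0` excludes the last index `j`. -/
def shiftRel (P : Set (Fin t → V)) : SetRel (Fin t → V) (Fin t → V) :=
  {p | p.1 ∈ P ∧ ∀ j, j + 1 ≠ 0 → p.2 j = p.1 (j + 1)}

/-- There is a walk of length `n` from `f` to `g` for the shift relation on `P`, that is, a tight
walk that appends `n` vertices to the tuple `f` and ends with the tuple `g`. -/
def ShiftWalk (P : Set (Fin t → V)) (n : ℕ) (f g : Fin t → V) : Prop :=
  ∃ p : RelSeries (shiftRel P), p.length = n ∧ p.head = f ∧ p.last = g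

lemma ShiftWalk.refl (f : Fin t → V) : ShiftWalk P 0 f f :=
  ⟨RelSeries.singleton _ f, rfl, rfl, rfl⟩

lemma ShiftWalk.trans {m n : ℕ} {f g h : Fin t → V} (hfg : ShiftWalk P m f g)
    (hgh : ShiftWalk P n g h) : ShiftWalk P (m + n) f h := by
  obtain ⟨p, rfl, rfl, rfl⟩ := hfg
  obtain ⟨q, rfl, hpq, rfl⟩ := hgh
  exact ⟨p.smash q hpq.symm, rfl, RelSeries.head_smash _, RelSeries.last_smash _⟩

lemma ShiftWalk.tail {n : ℕ} {f g h : Fin t → V} (hfg : ShiftWalk P n f g)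
    (hgh : (g, h) ∈ shiftRel P) : ShiftWalk P (n + 1) f h := by
  obtain ⟨p, rfl, rfl, rfl⟩ := hfg
  exact ⟨p.snoc h hgh, rfl, p.head_snoc _ _, p.last_snoc _ _⟩

lemma exists_zmod_chain_of_head_eq_last {α : Type*} {r : SetRel α α} (p : RelSeries r)
    (hlen : p.length ≠ 0) (hclosed : p.head = p.last) :
    ∃ F : ZMod p.length → α, ∀ i, (F i, F (i + 1)) ∈ r := by
  have : NeZero p.length := ⟨hlen⟩
  refine ⟨fun i => p (Fin.castSucc ⟨i.val, i.val_lt⟩), fun i => ?_⟩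
  have hval : (i + 1).val = (i.val + 1) % p.length := by
    rw [← ZMod.val_natCast, Nat.cast_add_one, ZMod.natCast_zmod_val]
  have hnext : p (Fin.castSucc ⟨(i + 1).val, (i + 1).val_lt⟩) = p (Fin.succ ⟨i.val, i.val_lt⟩) := by
    rcases (Nat.succ_le_of_lt i.val_lt).lt_or_eq with hlt | heq
    · exact congrArg p (Fin.ext (hval.trans (Nat.mod_eq_of_lt hlt)))
    · have hzero : Fin.castSucc ⟨(i + 1).val, (i + 1).val_lt⟩ = 0 :=
        Fin.ext (hval.trans ((congrArg (· % p.length) heq).trans (Nat.mod_self _)))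
      have hlast : Fin.succ ⟨i.val, i.val_lt⟩ = Fin.last p.length := Fin.ext heq
      rw [hzero, hlast]
      exact hclosed
  simpa only [hnext] using p.step ⟨i.val, i.val_lt⟩

lemma ShiftWalk.exists_closed_tight_walk {m : ℕ} (hm : m ≠ 0) {f : Fin t → V}
    (hf : ShiftWalk P m f f) :
    ∃ w : ZMod m → V, ∀ i, (fun j : Fin t => w (i + ((j : ℕ) : ZMod m))) ∈ P := by
  obtain ⟨p, rfl, hhead, hlast⟩ := hf
  obtain ⟨F, hF⟩ := exists_zmod_chain_of_head_eq_last p hm (hhead.trans hlast.symm)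
  have hentry (n : ℕ) : ∀ (hn : n < t) i, F i ⟨n, hn⟩ = F (i + n) 0 := by
    induction n with
    | zero => exact fun _ i => by rw [Nat.cast_zero, add_zero]; rfl
    | succ n ih =>
      intro hn i
      have hsucc : (⟨n, by omega⟩ : Fin t) + 1 = ⟨n + 1, hn⟩ :=
        Fin.ext (Fin.val_add_one_of_lt' hn)
      have hshift : F (i + 1) ⟨n, by omega⟩ = F i (⟨n, by omega⟩ + 1) :=
        (hF i).2 _ (by rw [hsucc]; exact Fin.ne_of_val_ne n.succ_ne_zero)
      rw [← hsucc, ← hshift, ih, Nat.cast_add_one, add_assoc, add_comm 1]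
  refine ⟨fun i => F i 0, fun i => ?_⟩
  simpa only [← hentry _ (Fin.is_lt _)] using (hF i).1

open Fin.CommRing in
lemma shiftWalk_rotate (hP : PermInvariant P) {f : Fin t → V}
    (hf : f ∈ P) (n : ℕ) : ShiftWalk P n f fun j => f (j + (n : Fin t)) := by
  induction n with
  | zero => simpa using ShiftWalk.refl f
  | succ n ih =>
    refine ih.tail ⟨hP f hf (Equiv.addRight (n : Fin t)), fun j _ => ?_⟩
    exact congrArg f (by push_cast; ring)

open Fin.CommRing in
lemma shiftWalk_update (hP : PermInvariant P) {f : Fin t → V}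
    (hf : f ∈ P) {i : Fin t} {v : V} (hg : Function.update f i v ∈ P) :
    ShiftWalk P t f (Function.update f i v) := by
  set g := Function.update f i v
  -- Rotate `f` until its entry `f i` comes first; dropping it, append `v` in its place.
  have hstep : ((fun j => f (j + i)), (fun j => g (j + (i + 1)))) ∈ shiftRel P := by
    refine ⟨hP f hf (Equiv.addRight i), fun j hj => ?_⟩
    have hne : j + (i + 1) ≠ i := fun h => hj (by linear_combination h)
    exact (Function.update_of_ne hne _ _).trans (congrArg f (by ring))
  have hfirst : ShiftWalk P (i + 1) f fun j => g (j + (i + 1)) := by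
    have := shiftWalk_rotate hP hf i
    rw [Fin.cast_val_eq_self] at this
    exact this.tail hstep
  have hrest := shiftWalk_rotate hP (hP g hg (Equiv.addRight (i + 1))) (t - (i + 1))
  have hback (j : Fin t) : j + ((t - (i + 1) : ℕ) : Fin t) + (i + 1) = j := by
    have hcast : ((t - (i + 1) : ℕ) : Fin t) + (i + 1) = 0 := by
      have hval : ((i + 1 : ℕ) : Fin t) = i + 1 := by rw [Nat.cast_add_one, Fin.cast_val_eq_self]
      rw [← hval, ← Nat.cast_add, Nat.sub_add_cancel (Nat.succ_le_of_lt i.is_lt), Fin.natCast_self]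
    rw [add_assoc, hcast, add_zero]
  simp only [Function.comp_apply, Equiv.coe_addRight, hback] at hrest
  have := hfirst.trans hrest
  rwa [Nat.add_sub_cancel' (Nat.succ_le_of_lt i.is_lt)] at this

lemma shiftWalk_swap (hP : PermInvariant P) {f : Fin t → V}
    (hf : f ∈ P) {i j : Fin t} (hij : i ≠ j) {v : V} (hi : Function.update f i v ∈ P)
    (hj : Function.update f j v ∈ P) : ShiftWalk P (3 * t) f (f ∘ Equiv.swap i j) := by
  have hswap := hP f hf (Equiv.swap i j)
  have hmid := hP _ hj (Equiv.swap i j)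
  have hmid_eq : Function.update f j v ∘ Equiv.swap i j =
      Function.update (Function.update f i v) j (f i) := by
    rw [Equiv.comp_swap_eq_update, Function.update_self, Function.update_of_ne hij,
      Function.update_idem, Function.update_comm hij.symm]
  have hswap_eq : f ∘ Equiv.swap i j =
      Function.update (Function.update (Function.update f i v) j (f i)) i (f j) := by
    rw [Equiv.comp_swap_eq_update, Function.update_comm hij, Function.update_idem,
      Function.update_comm hij.symm]
  rw [hmid_eq] at hmid
  rw [hswap_eq] at hswap ⊢
  have hwalk := ((shiftWalk_update hP hf hi).trans (shiftWalk_update hP hi hmid)).trans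
    (shiftWalk_update hP hmid hswap)
  rwa [show t + t + t = 3 * t by ring] at hwalk

lemma exists_shiftWalk_comp_perm (hP : PermInvariant P)
    (hexch : ∀ f ∈ P, ∀ i j, i ≠ j →
      ∃ v, Function.update f i v ∈ P ∧ Function.update f j v ∈ P)
    (σ : Equiv.Perm (Fin t)) : ∀ f ∈ P, ∃ r : ℕ, ShiftWalk P (r * t) f (f ∘ σ) := by
  induction σ using Equiv.Perm.swap_induction_on with
  | one => exact fun f _ => ⟨0, by simpa using ShiftWalk.refl f⟩
  | swap_mul σ i j hij ih =>
    intro f hf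
    obtain ⟨v, hi, hj⟩ := hexch f hf i j hij
    obtain ⟨r, hr⟩ := ih (f ∘ Equiv.swap i j) (hP f hf _)
    refine ⟨3 + r, ?_⟩
    rw [add_mul]
    exact (shiftWalk_swap hP hf hij hi hj).trans hr

open Fin.CommRing in
theorem exists_closed_tight_walk_mod_eq_sub_one (hP : PermInvariant P)
    (hexch : ∀ f ∈ P, ∀ i j, i ≠ j →
      ∃ v, Function.update f i v ∈ P ∧ Function.update f j v ∈ P)
    (hne : P.Nonempty) :
    ∃ m : ℕ, t ≤ m ∧ m % t = t - 1 ∧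
      ∃ w : ZMod m → V, ∀ i, (fun j : Fin t => w (i + ((j : ℕ) : ZMod m))) ∈ P := by
  obtain ⟨f, hf⟩ := hne
  have ht : 0 < t := Nat.pos_of_neZero t
  let ρ : Equiv.Perm (Fin t) := Equiv.addRight 1
  obtain ⟨r, hr⟩ := exists_shiftWalk_comp_perm hP hexch ρ f hf
  have hback : ShiftWalk P (2 * t - 1) (f ∘ ρ) f := by
    have hrot := shiftWalk_rotate hP (hP f hf ρ) (2 * t - 1)
    have hcancel (j : Fin t) : j + ((2 * t - 1 : ℕ) : Fin t) + 1 = j := by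
      rw [add_assoc, ← Nat.cast_add_one, Nat.sub_add_cancel (by omega), Nat.cast_mul,
        Fin.natCast_self, mul_zero, add_zero]
    simpa only [ρ, Function.comp_apply, Equiv.coe_addRight, hcancel] using hrot
  refine ⟨r * t + (2 * t - 1), by omega, ?_, (hr.trans hback).exists_closed_tight_walk (by omega)⟩
  rw [show r * t + (2 * t - 1) = t - 1 + t * (r + 1) by rw [mul_add, mul_comm t r]; omega,
    Nat.add_mul_mod_self_left, Nat.mod_eq_of_lt (by omega)]

end TightWalks

/-- Let `2 ≤ k ≤ t ≤ n` and let `G` be a `k`-graph on `n` vertices with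
minimum codegree `δ(G) > f_k(t)·n`. Then `K_t(G)` contains a closed tight walk whose order is
congruent to `−1` modulo `t`: there exist `m ≥ t` with `m ≡ t−1 (mod t)` and `w : ℤ/mℤ → V`
such that for every `i`, the vertices `w i, w (i+1), …, w (i+t−1)` are pairwise distinct and
form an edge of `K_t(G)`. -/
theorem stmt_8 {V : Type*} [Fintype V] [DecidableEq V] (n k t : ℕ)
    (hk : 2 ≤ k) (hkt : k ≤ t) (htn : t ≤ n) (hn : Fintype.card V = n)
    (E : Finset (Finset V)) (hE : ∀ e ∈ E, e.card = k)
    (hdeg : ∀ D : Finset V, D.card = k - 1 →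
      (1 - 1 / (((t-1).choose (k-1) : ℝ) + ((t-2).choose (k-2) : ℝ))) * n
        < ((E.filter (fun e => D ⊆ e)).card : ℝ)) :
    ∃ m : ℕ, t ≤ m ∧ m % t = t - 1 ∧
      ∃ w : ZMod m → V, ∀ i : ZMod m,
        (Function.Injective fun j : Fin t => w (i + ((j : ℕ) : ZMod m))) ∧
        cliqueEdge E k t
          (Finset.image (fun j : Fin t => w (i + ((j : ℕ) : ZMod m))) Finset.univ) := by
  subst hn
  obtain ⟨d, rfl⟩ : ∃ d, k = d + 1 := ⟨k - 1, by omega⟩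
  have : NeZero t := ⟨by omega⟩
  have : Nonempty V := Fintype.card_pos_iff.mp (by omega)
  have hd : d ≠ 0 := by omega
  have hcommon : HasCommonNeighbors E d ((t - 1).choose d + (t - 2).choose (d - 1)) :=
    hasCommonNeighbors_of_lt_codegree hE fun D hD => by
      rw [Nat.cast_add]
      exact hdeg D hD
  obtain ⟨X, hX⟩ := exists_cliqueEdge hcommon hd (by omega) (by omega) (Nat.le_add_right _ _)
  obtain ⟨m, htm, hmod, w, hw⟩ := exists_closed_tight_walk_mod_eq_sub_one
    (permInvariant_cliqueTuples E (d + 1) t)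
    (fun f hf i j hij => exists_update_mem_cliqueTuples hcommon hd hkt le_rfl hf hij)
    hX.nonempty_cliqueTuples
  exact ⟨m, htm, hmod, w, fun i => ⟨injective_of_mem_cliqueTuples (hw i), hw i⟩⟩
end

section
/- For every ε > 0 there exists n0 such that the following holds for every n ≥ n0. Let G be a 3-graph on an n-element vertex set V with minimum 1-degree δ_1(G) ≥ (5/9 + ε)·binom(n−1, 2). Then there exists a set of edges C ⊆ E(G) such that: (1) every vertex of V lies in some edge of C; (2) C is tight-connected; (3) there is a fractional matching of G of size n/3 which is zero on all edges outside C; and (4) there exist an integer m ≥ 3 with m ≡ 1 (mod 3) and a function w : ℤ/mℤ → V such that for every i the vertices w(i), w(i+1), w(i+2) are pairwise distinct and {w(i), w(i+1), w(i+2)} ∈ C. -/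
/-!
Every link graph has density more than `5/9`, so one of its connected components is a *dense
cluster*: it covers more than `2/3` of the vertices, contains more than `4/9` of all ordered pairs
as edges, and is not bipartite. Counting pairs shows that any two clusters share an edge, so all
triples formed by a vertex and an edge of its cluster lie in a single tight component `C`.

*Fractional matching.* If there were none in `C`, the Farkas lemma would give vertex weights of
negative sum with nonnegative sum on every triple of `C`. After shifting and scaling at a vertex of
minimal weight, these become a fractional cover of its cluster of total weight less than `n / 3`.
Rounding at thresholds `θ` and `1 - θ` and integrating over `θ` shows that every fractional cover
of a dense cluster has total weight at least `n / 3`.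

*Closed walk.* An odd closed walk in the cluster of `x` lets a tight walk pass from `(x, y, z)` to
`(x, z, y)` in a number of steps divisible by `3`, whenever `yz` is a cluster edge of `x`. More than
a third of all triples `(x, y, z)` have this property, so there is one for which moreover `zx` is a
cluster edge of `y`. Swapping the last two vertices twice, each time followed by a shift in two
steps, then gives a closed tight walk whose length is `1` modulo `3`.
-/

open Finset SimpleGraph

theorem exists_lt_mul_degree {V : Type*} [Fintype V] (G : SimpleGraph V) [DecidableRel G.Adj]
    {k m : ℕ} (h : k * Fintype.card V < 2 * m * #G.edgeFinset) : ∃ u, k < m * G.degree u := by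
  have hsum : ∑ _u : V, k < ∑ u, m * G.degree u := by
    rw [← mul_sum, G.sum_degrees_eq_twice_card_edges, sum_const, card_univ, smul_eq_mul]
    linarith
  obtain ⟨u, -, hu⟩ := exists_lt_of_sum_lt hsum
  exact ⟨u, hu⟩

theorem two_mul_card_edgeFinset_induce {V : Type*} (G : SimpleGraph V) [DecidableRel G.Adj]
    (A : Finset V) :
    2 * #(G.induce (A : Set V)).edgeFinset = #(G.interedges A A) := by
  rw [two_mul_card_edgeFinset]
  refine card_bij (fun p _ ↦ (p.1.1, p.2.1)) ?_ ?_ ?_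
  · rintro ⟨⟨x, hx⟩, ⟨y, hy⟩⟩ h
    exact G.mk_mem_interedges_iff.2 ⟨hx, hy, (mem_filter.1 h).2⟩
  · rintro ⟨⟨x, hx⟩, ⟨y, hy⟩⟩ - ⟨⟨x', hx'⟩, ⟨y', hy'⟩⟩ - h
    simpa using h
  · rintro ⟨x, y⟩ h
    obtain ⟨hx, hy, hxy⟩ := G.mk_mem_interedges_iff.1 h
    exact ⟨(⟨x, hx⟩, ⟨y, hy⟩), mem_filter.2 ⟨mem_univ _, hxy⟩, rfl⟩

section DenseCluster

variable {V : Type*} [Fintype V] [DecidableEq V]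

/-- `A` is a dense cluster of `G`: it induces a connected subgraph, covers more than `2/3` of the
vertices, and already the edges inside `A` together with all pairs outside `A` have density more
than `5/9`. Densities are those of sets of ordered pairs, so `G.interedges A A` counts every edge
inside `A` twice. -/
structure IsDenseCluster (G : SimpleGraph V) [DecidableRel G.Adj] (A : Finset V) : Prop where
  preconnected : (G.induce (A : Set V)).Preconnected
  two_mul_card_lt : 2 * Fintype.card V < 3 * #A
  five_mul_sq_lt : 5 * Fintype.card V ^ 2 < 9 * (#(G.interedges A A) + #Aᶜ ^ 2)

variable {G H : SimpleGraph V} [DecidableRel G.Adj] [DecidableRel H.Adj] {A B : Finset V}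

theorem two_mul_card_edgeFinset_le_of_closed (hA : ∀ x y, G.Adj x y → x ∈ A → y ∈ A) :
    2 * #G.edgeFinset ≤ #(G.interedges A A) + #Aᶜ ^ 2 := by
  rw [G.two_mul_card_edgeFinset, sq, ← card_product]
  refine (card_le_card ?_).trans (card_union_le _ _)
  rintro ⟨x, y⟩ hxy
  have hxy : G.Adj x y := (mem_filter.1 hxy).2
  have := hA x y hxy
  have := hA y x hxy.symm
  simp only [mem_union, mk_mem_interedges_iff, mem_product, mem_compl]
  tauto

theorem exists_isDenseCluster (hG : 5 * Fintype.card V ^ 2 < 18 * #G.edgeFinset) :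
    ∃ A, IsDenseCluster G A := by
  classical
  obtain ⟨u, hu⟩ := exists_lt_mul_degree G (k := 5 * Fintype.card V) (m := 9) (by linarith)
  set K := G.connectedComponentMk u
  set A : Finset V := K.supp.toFinset
  have hclosed : ∀ x y, G.Adj x y → x ∈ A → y ∈ A := fun x y hxy hx ↦
    Set.mem_toFinset.2 (K.mem_supp_of_adj_mem_supp (Set.mem_toFinset.1 hx) hxy)
  have hdeg : G.degree u ≤ #A := card_le_card fun y hy ↦
    hclosed u y ((G.mem_neighborFinset u y).1 hy) (Set.mem_toFinset.2 rfl)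
  have hpairs := two_mul_card_edgeFinset_le_of_closed hclosed
  have hinside := G.card_interedges_le_mul A A
  have hcompl := card_add_card_compl A
  refine ⟨A, ?_, ?_, by linarith⟩
  · rw [Set.coe_toFinset]
    exact K.connected_toSimpleGraph.preconnected
  · -- `9 (a² + (n - a)²) > 5 n²` says `(3a - n) (3a - 2n) > 0`, and `3a > n`.
    by_contra! hsmall
    nlinarith

namespace IsDenseCluster

theorem four_mul_sq_lt (hA : IsDenseCluster G A) :
    4 * Fintype.card V ^ 2 < 9 * #(G.interedges A A) := by
  have := hA.two_mul_card_lt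
  have := hA.five_mul_sq_lt
  have hcompl := card_add_card_compl A
  have : (3 * #Aᶜ) ^ 2 ≤ Fintype.card V ^ 2 := Nat.pow_le_pow_left (by lia) 2
  linarith

theorem mono (hA : IsDenseCluster G A) (h : ∀ x ∈ A, ∀ y ∈ A, G.Adj x y → H.Adj x y) :
    IsDenseCluster H A where
  preconnected := hA.preconnected.mono fun x y ↦ h x x.2 y y.2
  two_mul_card_lt := hA.two_mul_card_lt
  five_mul_sq_lt := by
    have hsub : G.interedges A A ⊆ H.interedges A A := fun p hp ↦ by
      obtain ⟨hx, hy, hxy⟩ := G.mem_interedges_iff.1 hp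
      exact H.mem_interedges_iff.2 ⟨hx, hy, h _ hx _ hy hxy⟩
    grw [← card_le_card hsub]
    exact hA.five_mul_sq_lt

theorem exists_adj (hA : IsDenseCluster G A) : ∃ x ∈ A, ∃ y ∈ A, G.Adj x y := by
  have hpos : 0 < #(G.interedges A A) := by linarith [hA.four_mul_sq_lt, sq_nonneg (Fintype.card V)]
  obtain ⟨⟨x, y⟩, hxy⟩ := card_pos.1 hpos
  rw [mk_mem_interedges_iff] at hxy
  exact ⟨x, hxy.1, y, hxy.2.1, hxy.2.2⟩

theorem exists_adj_adj (hA : IsDenseCluster G A) (hB : IsDenseCluster H B) :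
    ∃ x ∈ A ∩ B, ∃ y ∈ A ∩ B, G.Adj x y ∧ H.Adj x y := by
  by_contra! hcon
  have hdisj : Disjoint (G.interedges A A) (H.interedges B B) := by
    rw [Finset.disjoint_left]
    rintro ⟨x, y⟩ hG hH
    rw [mk_mem_interedges_iff] at hG hH
    exact hcon x (mem_inter.2 ⟨hG.1, hH.1⟩) y (mem_inter.2 ⟨hG.2.1, hH.2.1⟩) hG.2.2 hH.2.2
  have hunion : #(G.interedges A A) + #(H.interedges B B) ≤ #(A ×ˢ A ∪ B ×ˢ B) := by
    rw [← card_union_of_disjoint hdisj]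
    exact card_le_card (union_subset_union (filter_subset _ _) (filter_subset _ _))
  have hsquares := card_union_add_card_inter (A ×ˢ A) (B ×ˢ B)
  rw [product_inter_product, card_product, card_product, card_product] at hsquares
  have hinter := card_union_add_card_inter A B
  have hle := card_le_univ (A ∪ B)
  have hAc := card_add_card_compl A
  have hBc := card_add_card_compl B
  obtain ⟨-, hA, hA'⟩ := hA
  obtain ⟨-, hB, hB'⟩ := hB
  zify at *
  -- The total number of pairs is at most `a² + b² - (a + b - n)² + (n - a)² + (n - b)²`,
  -- which equals `n² + (a - b)²`.
  have hsq : (#A + #B - Fintype.card V : ℤ) ^ 2 ≤ #(A ∩ B) * #(A ∩ B) := by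
    rw [← sq]
    exact pow_le_pow_left₀ (by linarith) (by linarith) 2
  have hdiff : (3 * (#A - #B : ℤ)) ^ 2 ≤ (Fintype.card V : ℤ) ^ 2 :=
    sq_le_sq' (by linarith) (by linarith)
  rw [← eq_sub_iff_add_eq'] at hAc hBc
  rw [hAc] at hA'
  rw [hBc] at hB'
  linarith

theorem not_isBipartite_induce (hA : IsDenseCluster G A) :
    ¬ (G.induce (A : Set V)).IsBipartite := by
  intro hbip
  have hedges : 4 * #(G.induce (A : Set V)).edgeFinset ≤ #A ^ 2 := by
    have h := hbip.four_mul_encard_edgeSet_le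
    rw [← coe_edgeFinset, ENat.card_coe_set_eq, Set.encard_coe_eq_coe_finsetCard,
      Set.encard_coe_eq_coe_finsetCard] at h
    exact_mod_cast h
  have hinside := two_mul_card_edgeFinset_induce G A
  have hcompl := card_add_card_compl A
  obtain ⟨-, hcard, hdense⟩ := hA
  nlinarith

end IsDenseCluster

theorem nine_mul_le_five_mul_sq {s r p b : ℤ} (hp : 0 ≤ p) (hr : 0 ≤ r) (hb : 0 ≤ b)
    (hps : p ≤ s) (hsp : 3 * (s + p) ≤ 2 * (r + s + b)) (hbs : 2 * b ≤ r + s) :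
    9 * (s ^ 2 + 2 * (p * r) + b ^ 2) ≤ 5 * (r + s + b) ^ 2 := by
  rw [← sub_nonneg] at hps hsp hbs
  nlinarith [mul_nonneg hp hps, mul_nonneg hr hb, mul_nonneg hb hsp, mul_nonneg hps hsp,
    mul_nonneg hps hbs, mul_nonneg hsp hsp, mul_nonneg hsp hbs]

namespace IsDenseCluster

theorem two_mul_card_le (hA : IsDenseCluster G A) {P R : Finset V} (hP : P ⊆ A) (hR : R ⊆ A)
    (hdisj : Disjoint P R) (hRP : ∀ x ∈ R, ∀ y ∈ A, G.Adj x y → y ∈ P) :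
    2 * Fintype.card V ≤ 3 * (#(A \ R) + #P) := by
  by_contra! hsmall
  have hcover : #(G.interedges A A) ≤ #(A \ R) * #(A \ R) + 2 * (#P * #R) := by
    calc #(G.interedges A A) ≤ #((A \ R) ×ˢ (A \ R) ∪ (P ×ˢ R ∪ R ×ˢ P)) := by
          refine card_le_card ?_
          rintro ⟨x, y⟩ hxy
          obtain ⟨hx, hy, hxy⟩ := G.mk_mem_interedges_iff.1 hxy
          have := fun hxR ↦ hRP x hxR y hy hxy
          have := fun hyR ↦ hRP y hyR x hx hxy.symm
          simp only [mem_union, mem_product, mem_sdiff]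
          tauto
      _ ≤ #(A \ R) * #(A \ R) + (#P * #R + #R * #P) := by
          simp only [← card_product]
          exact (card_union_le _ _).trans (by grw [card_union_le])
      _ = _ := by ring
  have hPR : #P ≤ #(A \ R) := card_le_card (subset_sdiff.2 ⟨hP, hdisj⟩)
  have hcompl := card_add_card_compl A
  have hsdiff := card_sdiff_add_card_eq_card hR
  obtain ⟨-, hcard, hdense⟩ := hA
  rw [← hcompl, ← hsdiff] at hcard hdense hsmall
  have hpoly := nine_mul_le_five_mul_sq (s := #(A \ R)) (r := #R) (p := #P) (b := #Aᶜ)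
    (by lia) (by lia) (by lia) (by lia) (by lia) (by lia)
  zify at hdense hcover
  linarith

end IsDenseCluster
end DenseCluster

section LayerCake

variable {ι : Type*} {s : Finset ι} {z : ι → ℝ}

theorem integral_indicator_Iic_one_le {c : ℝ} (hc : 0 ≤ c) :
    ∫ θ in (0 : ℝ)..1, (Set.Iic c).indicator 1 θ ≤ c := by
  rw [intervalIntegral.integral_of_le zero_le_one,
    MeasureTheory.integral_indicator_one measurableSet_Iic,
    MeasureTheory.measureReal_restrict_apply measurableSet_Iic, Set.inter_comm, Set.Ioc_inter_Iic]
  simp [hc]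

theorem integral_card_filter_le_le_sum (hz : ∀ i ∈ s, 0 ≤ z i) :
    ∫ θ in (0 : ℝ)..1, (#{i ∈ s | θ ≤ z i} : ℝ) ≤ ∑ i ∈ s, z i := by
  have hcard (θ : ℝ) : (#{i ∈ s | θ ≤ z i} : ℝ) = ∑ i ∈ s, (Set.Iic (z i)).indicator 1 θ := by
    simp [Set.indicator_apply]
  have hint : ∀ i ∈ s, IntervalIntegrable ((Set.Iic (z i)).indicator (1 : ℝ → ℝ))
      MeasureTheory.volume 0 1 := fun i _ ↦
    (intervalIntegrable_iff.1 intervalIntegrable_const).indicator measurableSet_Iic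
      |> intervalIntegrable_iff.2
  simp only [hcard]
  rw [intervalIntegral.integral_finsetSum hint]
  exact sum_le_sum fun i hi ↦ integral_indicator_Iic_one_le (hz i hi)

theorem le_two_mul_sum_of_le_card_add_card {K : ℝ} (hz : ∀ i ∈ s, 0 ≤ z i)
    (hK : ∀ θ ∈ Set.Icc (0 : ℝ) 1, K ≤ #{i ∈ s | θ ≤ z i} + #{i ∈ s | 1 - θ ≤ z i}) :
    K ≤ 2 * ∑ i ∈ s, z i := by
  set F : ℝ → ℝ := fun θ ↦ #{i ∈ s | θ ≤ z i} with hF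
  have hanti : Antitone F := fun θ θ' h ↦ by
    simp only [hF]
    gcongr
  have hint : IntervalIntegrable F MeasureTheory.volume 0 1 := hanti.intervalIntegrable
  have hint' : IntervalIntegrable (fun θ ↦ F (1 - θ)) MeasureTheory.volume 0 1 := by
    simpa using (hint.comp_sub_left 1).symm
  calc K = ∫ _ in (0 : ℝ)..1, K := by simp
    _ ≤ ∫ θ in (0 : ℝ)..1, (F θ + F (1 - θ)) := intervalIntegral.integral_mono_on zero_le_one
        intervalIntegrable_const (hint.add hint') hK
    _ = 2 * ∫ θ in (0 : ℝ)..1, F θ := by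
        rw [intervalIntegral.integral_add hint hint', intervalIntegral.integral_comp_sub_left]
        simp [two_mul]
    _ ≤ 2 * ∑ i ∈ s, z i := by grw [integral_card_filter_le_le_sum hz]

end LayerCake

theorem IsDenseCluster.card_div_three_le_sum {V : Type*} [Fintype V] [DecidableEq V]
    {G : SimpleGraph V} [DecidableRel G.Adj] {A : Finset V} (hA : IsDenseCluster G A) {z : V → ℝ}
    (hz : ∀ x, 0 ≤ z x) (hcover : ∀ x ∈ A, ∀ y ∈ A, G.Adj x y → 1 ≤ z x + z y) :
    (Fintype.card V : ℝ) / 3 ≤ ∑ x, z x := by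
  have hcount (θ : ℝ) (hθ : θ ≤ 1 / 2) :
      2 * Fintype.card V ≤ 3 * (#{x ∈ A | θ ≤ z x} + #{x ∈ A | 1 - θ ≤ z x}) := by
    set P := {x ∈ A | 1 - θ ≤ z x}
    set R := {x ∈ A | z x < θ}
    have hsdiff : {x ∈ A | θ ≤ z x} = A \ R := by
      rw [← filter_not]
      simp only [not_lt]
    have hdisj : Disjoint P R := disjoint_filter.2 fun x _ h ↦ by linarith
    rw [hsdiff]
    refine hA.two_mul_card_le (filter_subset _ _) (filter_subset _ _) hdisj fun x hx y hy hxy ↦ ?_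
    obtain ⟨hxA, hx⟩ := mem_filter.1 hx
    exact mem_filter.2 ⟨hy, by linarith [hcover x hxA y hy hxy]⟩
  have hA_sum : 2 * (Fintype.card V : ℝ) / 3 ≤ 2 * ∑ x ∈ A, z x := by
    refine le_two_mul_sum_of_le_card_add_card (fun x _ ↦ hz x) fun θ _ ↦ ?_
    rw [div_le_iff₀' three_pos]
    rcases le_total θ (1 / 2) with hθ | hθ
    · exact_mod_cast hcount θ hθ
    · have h := hcount (1 - θ) (by linarith)
      rw [sub_sub_cancel, add_comm] at h
      exact_mod_cast h
  have hsub := sum_le_sum_of_subset_of_nonneg (subset_univ A) fun x _ _ ↦ hz x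
  linarith

section FractionalMatching

variable {V : Type*} [DecidableEq V] {C E : Finset (Finset V)} {ω : Finset V → ℝ} {k : ℕ}

/-- A perfect fractional matching of a hypergraph `C`: nonnegative weights supported on `C` that
sum to `1` at every vertex. -/
structure IsPerfectFractionalMatching (C : Finset (Finset V)) (ω : Finset V → ℝ) : Prop where
  nonneg : ∀ e, 0 ≤ ω e
  eq_zero_of_notMem : ∀ e ∉ C, ω e = 0
  sum_eq_one : ∀ v, ∑ e ∈ C with v ∈ e, ω e = 1

namespace IsPerfectFractionalMatching

theorem mono (hω : IsPerfectFractionalMatching C ω) (hCE : C ⊆ E) :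
    IsPerfectFractionalMatching E ω where
  nonneg := hω.nonneg
  eq_zero_of_notMem e he := hω.eq_zero_of_notMem e fun heC ↦ he (hCE heC)
  sum_eq_one v := by
    rw [← hω.sum_eq_one v]
    refine (sum_subset (filter_subset_filter _ hCE) fun e he he' ↦ hω.eq_zero_of_notMem e ?_).symm
    exact fun heC ↦ he' (mem_filter.2 ⟨heC, (mem_filter.1 he).2⟩)

theorem le_one (hω : IsPerfectFractionalMatching C ω) (hC : ∀ e ∈ C, e.Nonempty) (e : Finset V) :
    ω e ≤ 1 := by
  by_cases he : e ∈ C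
  · obtain ⟨v, hv⟩ := hC e he
    rw [← hω.sum_eq_one v]
    exact single_le_sum (fun f _ ↦ hω.nonneg f) (mem_filter.2 ⟨he, hv⟩)
  · rw [hω.eq_zero_of_notMem e he]
    exact zero_le_one

theorem mul_sum_eq_card [Fintype V] (hω : IsPerfectFractionalMatching C ω)
    (hC : (C : Set (Finset V)).Sized k) : k * ∑ e ∈ C, ω e = Fintype.card V := by
  calc k * ∑ e ∈ C, ω e = ∑ e ∈ C, ∑ _v ∈ e, ω e := by
        rw [mul_sum]
        refine sum_congr rfl fun e he ↦ ?_
        rw [sum_const, hC he, nsmul_eq_mul]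
    _ = ∑ v, ∑ e ∈ C with v ∈ e, ω e := sum_comm' (by simp)
    _ = Fintype.card V := by simp [hω.sum_eq_one]

end IsPerfectFractionalMatching

variable [Fintype V] [Nonempty V]

theorem exists_isPerfectFractionalMatching_of_mem_convexHull (hk : k ≠ 0)
    (h : (fun _ ↦ k / Fintype.card V : V → ℝ) ∈
      convexHull ℝ ((fun e : Finset V ↦ (e : Set V).indicator 1) '' C)) :
    ∃ ω, IsPerfectFractionalMatching C ω := by
  have hinj : Function.Injective fun e : Finset V ↦ (e : Set V).indicator (1 : V → ℝ) :=
    fun e f hef ↦ coe_injective (Set.indicator_one_inj ℝ hef)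
  rw [← coe_image, mem_convexHull'] at h
  obtain ⟨w, hw, -, hsum⟩ := h
  rw [sum_image hinj.injOn] at hsum
  refine ⟨fun e ↦ if e ∈ C then w ((e : Set V).indicator 1) * (Fintype.card V / k) else 0,
    fun e ↦ ?_, fun e he ↦ if_neg he, fun v ↦ ?_⟩
  · split_ifs with he
    · exact mul_nonneg (hw _ (mem_image_of_mem _ he)) (by positivity)
    · exact le_rfl
  · have hv : ∑ e ∈ C with v ∈ e, w ((e : Set V).indicator 1) = k / Fintype.card V := by
      simpa [Set.indicator_apply, sum_filter] using congrFun hsum v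
    calc _ = ∑ e ∈ C with v ∈ e, w ((e : Set V).indicator 1) * (Fintype.card V / k) :=
          sum_congr rfl fun e he ↦ if_pos (mem_filter.1 he).1
      _ = 1 := by
          rw [← sum_mul, hv]
          field_simp

/-- The Farkas lemma for the incidence matrix of a uniform hypergraph. -/
theorem exists_isPerfectFractionalMatching (hk : k ≠ 0) (hC : (C : Set (Finset V)).Sized k)
    (h : ∀ y : V → ℝ, (∀ e ∈ C, 0 ≤ ∑ v ∈ e, y v) → 0 ≤ ∑ v, y v) :
    ∃ ω, IsPerfectFractionalMatching C ω := by
  refine exists_isPerfectFractionalMatching_of_mem_convexHull hk ?_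
  by_contra hp
  obtain ⟨f, u, hfp, hfC⟩ := geometric_hahn_banach_point_closed (convex_convexHull ℝ _)
    ((C.finite_toSet.image _).isClosed_convexHull ℝ) hp
  obtain ⟨g, hg⟩ : ∃ g : V → ℝ, ∀ x, f x = ∑ v, x v * g v :=
    ⟨_, f.toLinearMap.pi_apply_eq_sum_univ⟩
  -- Uniformity turns the affine functional `f - u` into a linear one on the indicators.
  have hsum := h (fun v ↦ g v - u / k) fun e he ↦ ?_
  · have hcard : (0 : ℝ) < Fintype.card V := by exact_mod_cast Fintype.card_pos
    rw [hg, ← mul_sum, div_mul_eq_mul_div, div_lt_iff₀ hcard] at hfp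
    rw [sum_sub_distrib, sum_const, card_univ, nsmul_eq_mul] at hsum
    field_simp at hsum
    linarith
  · have hfe := hfC _ (subset_convexHull ℝ _ (Set.mem_image_of_mem _ he))
    rw [sum_sub_distrib, sum_const, hC he, nsmul_eq_mul, mul_div_cancel₀ _ (by positivity)]
    rw [hg] at hfe
    simp only [Set.indicator_apply, mem_coe, Pi.one_apply, ite_mul, one_mul, zero_mul,
      sum_ite_mem, univ_inter] at hfe
    linarith

end FractionalMatching

theorem ne_of_card_triple {α : Type*} [DecidableEq α] {a b c : α}
    (h : #({a, b, c} : Finset α) = 3) : a ≠ b ∧ a ≠ c ∧ b ≠ c := by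
  refine ⟨?_, ?_, ?_⟩ <;> rintro rfl <;> grind [card_le_two]

theorem triple_rotate {α : Type*} [DecidableEq α] (a b c : α) :
    ({b, c, a} : Finset α) = {a, b, c} := by
  rw [pair_comm, insert_comm]

section LinkGraph

variable {V : Type*} [DecidableEq V] {C E : Finset (Finset V)} {v x y : V}

/-- The link of `v` in a `3`-graph `E`: the graph of all pairs that form an edge of `E` with `v`. -/
def linkGraph (E : Finset (Finset V)) (v : V) : SimpleGraph V where
  Adj x y := x ≠ y ∧ {v, x, y} ∈ E
  symm := ⟨fun x y h ↦ ⟨h.1.symm, pair_comm x y ▸ h.2⟩⟩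

instance : DecidableRel (linkGraph E v).Adj :=
  fun x y ↦ inferInstanceAs (Decidable (x ≠ y ∧ {v, x, y} ∈ E))

theorem card_filter_mem_le_card_edgeFinset_linkGraph [Fintype V]
    (hE : (E : Set (Finset V)).Sized 3) (v : V) :
    #{e ∈ E | v ∈ e} ≤ #(linkGraph E v).edgeFinset := by
  refine card_le_card_of_surjOn (fun s ↦ insert v s.toFinset) fun e he ↦ ?_
  obtain ⟨he, hve⟩ := mem_filter.1 he
  obtain ⟨x, y, hxy, hxy_eq⟩ := card_eq_two.1
    (show #(e.erase v) = 2 by rw [card_erase_of_mem hve, hE he])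
  have he_eq : {v, x, y} = e := by rw [← hxy_eq, insert_erase hve]
  refine ⟨s(x, y), ?_, (congrArg (insert v) Sym2.toFinset_mk_eq).trans he_eq⟩
  rw [mem_coe, mem_edgeFinset]
  exact ⟨hxy, he_eq ▸ he⟩

variable [Fintype V] [Nonempty V]

theorem exists_isPerfectFractionalMatching_of_isDenseCluster (hC : (C : Set (Finset V)).Sized 3)
    (hlink : ∀ v, ∃ A, IsDenseCluster (linkGraph C v) A) :
    ∃ ω, IsPerfectFractionalMatching C ω := by
  refine exists_isPerfectFractionalMatching three_ne_zero hC fun y hy ↦ ?_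
  obtain ⟨v, -, hv⟩ := exists_min_image univ y univ_nonempty
  rcases le_or_gt 0 (y v) with hnonneg | hneg
  · exact sum_nonneg fun x _ ↦ hnonneg.trans (hv x (mem_univ x))
  -- At a vertex of minimal weight the shifted weights form a fractional cover of the cluster.
  obtain ⟨A, hA⟩ := hlink v
  have hscale : 0 < -3 * y v := by linarith
  have hbound := hA.card_div_three_le_sum (z := fun x ↦ (y x - y v) / (-3 * y v))
    (fun x ↦ div_nonneg (sub_nonneg.2 (hv x (mem_univ x))) hscale.le) fun a _ b _ hab ↦ ?_
  · rw [← sum_div, sum_sub_distrib, sum_const, card_univ, nsmul_eq_mul,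
      le_div_iff₀ hscale] at hbound
    linarith
  · obtain ⟨hva, hvb, hab_ne⟩ := ne_of_card_triple (hC hab.2)
    have hedge := hy _ hab.2
    rw [sum_insert (by simp [hva, hvb]), sum_pair hab_ne] at hedge
    rw [← add_div, le_div_iff₀ hscale]
    linarith

end LinkGraph

section TightConnected

variable {V : Type*} [DecidableEq V] {E : Finset (Finset V)} {e e₀ f : Finset V}
  {v v' x x' y y' : V}

/-- The adjacency graph of the edges of a `3`-graph: two edges are adjacent if they share exactly
two vertices. -/
def tightGraph (E : Finset (Finset V)) : SimpleGraph (Finset V) where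
  Adj e f := e ≠ f ∧ e ∈ E ∧ f ∈ E ∧ #(e ∩ f) = 2
  symm := ⟨fun e f h ↦ ⟨h.1.symm, h.2.2.1, h.2.1, inter_comm e f ▸ h.2.2.2⟩⟩

/-- A set of triples is tight-connected if any two members are joined by a sequence of members in
which consecutive ones share exactly two vertices. -/
def IsTightConnected (C : Finset (Finset V)) : Prop :=
  ∀ e ∈ C, ∀ f ∈ C, ∃ (m : ℕ) (w : ℕ → Finset V), w 0 = e ∧ w m = f ∧
    (∀ i ≤ m, w i ∈ C) ∧ ∀ i < m, #(w i ∩ w (i + 1)) = 2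

open Classical in
/-- The tight component of the edge `e₀` of `E`. -/
noncomputable def tightComponent (E : Finset (Finset V)) (e₀ : Finset V) : Finset (Finset V) :=
  {e ∈ E | (tightGraph E).Reachable e₀ e}

theorem mem_tightComponent :
    e ∈ tightComponent E e₀ ↔ e ∈ E ∧ (tightGraph E).Reachable e₀ e := by
  classical exact mem_filter

theorem tightComponent_subset : tightComponent E e₀ ⊆ E :=
  fun _ he ↦ (mem_tightComponent.1 he).1

theorem mem_of_reachable_tightGraph (h : (tightGraph E).Reachable e f) (he : e ∈ E) : f ∈ E := by
  obtain ⟨p⟩ := h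
  induction p with
  | nil => exact he
  | cons h _ ih => exact ih h.2.2.1

theorem isTightConnected_tightComponent (E : Finset (Finset V)) (e₀ : Finset V) :
    IsTightConnected (tightComponent E e₀) := by
  intro e he f hf
  obtain ⟨he, hreach⟩ := mem_tightComponent.1 he
  obtain ⟨p⟩ := hreach.symm.trans (mem_tightComponent.1 hf).2
  refine ⟨p.length, p.getVert, p.getVert_zero, p.getVert_length, fun i _ ↦ ?_, fun i hi ↦ ?_⟩
  · have hi : (tightGraph E).Reachable e (p.getVert i) := ⟨p.take i⟩
    exact mem_tightComponent.2 ⟨mem_of_reachable_tightGraph hi he, hreach.trans hi⟩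
  · exact (p.adj_getVert_succ hi).2.2.2

theorem tightGraph_reachable_of_two_le_card_inter (hE : (E : Set (Finset V)).Sized 3) (he : e ∈ E)
    (hf : f ∈ E) (hef : 2 ≤ #(e ∩ f)) : (tightGraph E).Reachable e f := by
  rcases eq_or_ne e f with rfl | hne
  · rfl
  have hlt : #(e ∩ f) < #e := card_lt_card <| inter_subset_left.ssubset_of_ne fun h ↦
    hne (eq_of_subset_of_card_le (inter_eq_left.1 h) (by rw [hE he, hE hf]))
  rw [hE he] at hlt
  exact Adj.reachable ⟨hne, he, hf, by lia⟩

theorem tightGraph_reachable_of_linkGraph_reachable (hE : (E : Set (Finset V)).Sized 3)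
    (h : (linkGraph E v).Reachable x x') (hxy : (linkGraph E v).Adj x y)
    (hxy' : (linkGraph E v).Adj x' y') : (tightGraph E).Reachable {v, x, y} {v, x', y'} := by
  obtain ⟨p⟩ := h
  have hshare {x y y'} (hxy : (linkGraph E v).Adj x y) (hxy' : (linkGraph E v).Adj x y') :
      (tightGraph E).Reachable {v, x, y} {v, x, y'} := by
    refine tightGraph_reachable_of_two_le_card_inter hE hxy.2 hxy'.2 ?_
    rw [← card_pair (ne_of_card_triple (hE hxy.2)).1]
    exact card_le_card (by grind)
  induction p generalizing y with
  | nil => exact hshare hxy hxy'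
  | cons h _ ih =>
    refine (hshare hxy h).trans ?_
    rw [pair_comm]
    exact ih h.symm hxy'

theorem IsDenseCluster.tightGraph_reachable [Fintype V] (hE : (E : Set (Finset V)).Sized 3)
    {A A' : Finset V} (hA : IsDenseCluster (linkGraph E v) A)
    (hA' : IsDenseCluster (linkGraph E v') A') (hx : x ∈ A) (hxy : (linkGraph E v).Adj x y)
    (hx' : x' ∈ A') (hxy' : (linkGraph E v').Adj x' y') :
    (tightGraph E).Reachable {v, x, y} {v', x', y'} := by
  obtain ⟨a, ha, b, -, hab, hab'⟩ := hA.exists_adj_adj hA'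
  rw [mem_inter] at ha
  have hreach {v x y} {A : Finset V} (hA : IsDenseCluster (linkGraph E v) A) (hx : x ∈ A)
      (hxy : (linkGraph E v).Adj x y) (ha : a ∈ A) (hab : (linkGraph E v).Adj a b) :
      (tightGraph E).Reachable {v, x, y} {v, a, b} :=
    tightGraph_reachable_of_linkGraph_reachable hE
      ((hA.preconnected ⟨x, hx⟩ ⟨a, ha⟩).map (Embedding.induce _).toHom) hxy hab
  have hswitch : (tightGraph E).Reachable {v, a, b} {v', a, b} := by
    refine tightGraph_reachable_of_two_le_card_inter hE hab.2 hab'.2 ?_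
    rw [← card_pair hab.1]
    exact card_le_card (by grind)
  exact (hreach hA hx hxy ha.1 hab).trans (hswitch.trans (hreach hA' hx' hxy' ha.2 hab').symm)

theorem exists_isTightConnected_isDenseCluster [Fintype V] [Nonempty V]
    (hE : (E : Set (Finset V)).Sized 3) (hlink : ∀ v, ∃ A, IsDenseCluster (linkGraph E v) A) :
    ∃ C ⊆ E, IsTightConnected C ∧ ∀ v, ∃ A, IsDenseCluster (linkGraph C v) A := by
  obtain ⟨v₀⟩ := ‹Nonempty V›
  obtain ⟨A₀, hA₀⟩ := hlink v₀
  obtain ⟨x₀, hx₀, y₀, -, hxy₀⟩ := hA₀.exists_adj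
  refine ⟨tightComponent E {v₀, x₀, y₀}, tightComponent_subset,
    isTightConnected_tightComponent _ _, fun v ↦ ?_⟩
  obtain ⟨A, hA⟩ := hlink v
  refine ⟨A, hA.mono fun x hx y _ hxy ↦ ⟨hxy.1, mem_tightComponent.2 ⟨hxy.2, ?_⟩⟩⟩
  exact hA₀.tightGraph_reachable hE hA hx₀ hxy₀ hx hxy

end TightConnected

section JoinedMod

variable {α : Type*} {r : SetRel α α} {n : ℕ} {i j : ZMod n} {a b c : α}

/-- `b` can be reached from `a` by a number of `r`-steps whose residue modulo `n` is `i`. -/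
def IsJoinedMod (r : SetRel α α) {n : ℕ} (i : ZMod n) (a b : α) : Prop :=
  ∃ p : RelSeries r, p.head = a ∧ p.last = b ∧ p.length = i

namespace IsJoinedMod

theorem refl (a : α) : IsJoinedMod r (0 : ZMod n) a a :=
  ⟨.singleton r a, rfl, rfl, Nat.cast_zero⟩

theorem trans (hab : IsJoinedMod r i a b) (hbc : IsJoinedMod r j b c) :
    IsJoinedMod r (i + j) a c := by
  obtain ⟨p, rfl, rfl, rfl⟩ := hab
  obtain ⟨q, hq, rfl, rfl⟩ := hbc
  exact ⟨p.smash q hq.symm, RelSeries.head_smash _, RelSeries.last_smash _, by simp⟩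

theorem cons (hab : (a, b) ∈ r) (hbc : IsJoinedMod r i b c) : IsJoinedMod r (i + 1) a c := by
  obtain ⟨p, rfl, rfl, rfl⟩ := hbc
  exact ⟨p.cons a hab, by simp, by simp, by simp⟩

theorem exists_cycle (h : IsJoinedMod r i a a) (hi : i ≠ 0) :
    ∃ m : ℕ, (m : ZMod n) = i ∧ ∃ u : ZMod m → α, ∀ k, (u k, u (k + 1)) ∈ r := by
  obtain ⟨p, hhead, hlast, rfl⟩ := h
  have : NeZero p.length := ⟨by rintro h0; simp [h0] at hi⟩
  refine ⟨p.length, rfl, fun k ↦ p ⟨k.val, k.val_lt.trans (Nat.lt_succ_self _)⟩, fun k ↦ ?_⟩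
  have hsucc : p ⟨(k + 1).val, (k + 1).val_lt.trans (Nat.lt_succ_self _)⟩ =
      p ⟨k.val + 1, Nat.succ_lt_succ k.val_lt⟩ := by
    have hk : k + 1 = (k.val + 1 : ℕ) := by rw [Nat.cast_succ, ZMod.natCast_zmod_val]
    rcases (Nat.succ_le_of_lt k.val_lt).lt_or_eq with hlt | heq
    · have hval : (k + 1).val = k.val + 1 := by rw [hk, ZMod.val_cast_of_lt hlt]
      exact congrArg p (Fin.ext hval)
    · have hzero : (k + 1).val = 0 := by
        rw [hk, ← Nat.succ_eq_add_one, heq, ZMod.natCast_self, ZMod.val_zero]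
      calc p ⟨(k + 1).val, _⟩ = p.head := congrArg p (Fin.ext hzero)
        _ = p.last := hhead.trans hlast.symm
        _ = p ⟨k.val + 1, _⟩ := congrArg p (Fin.ext heq.symm)
  simp only [hsucc]
  exact p.step ⟨k.val, k.val_lt⟩

end IsJoinedMod

end JoinedMod

theorem exists_mem_apply_mem_of_card_lt {α : Type*} [Fintype α] {ρ : α → α} {T : Finset α}
    (hρ : ∀ t, ρ (ρ (ρ t)) = t) (hT : Fintype.card α < 3 * #T) : ∃ t ∈ T, ρ t ∈ T := by
  classical
  by_contra! hcon
  have hbij : ρ.Bijective := Finite.injective_iff_bijective.1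
    (Function.LeftInverse.injective (g := ρ ∘ ρ) hρ)
  set χ : α → ℕ := fun t ↦ if t ∈ T then 1 else 0
  have hsum (f : α → ℕ) : ∑ t, f (ρ t) = ∑ t, f t := hbij.sum_comp f
  have hχ (t : α) : χ t + χ (ρ t) + χ (ρ (ρ t)) ≤ 1 := by
    have := hcon (ρ (ρ t))
    grind
  have hcard : 3 * #T ≤ Fintype.card α :=
    calc 3 * #T = ∑ t, (χ t + χ (ρ t) + χ (ρ (ρ t))) := by
          rw [sum_add_distrib, sum_add_distrib, hsum fun t ↦ χ (ρ t), hsum χ, sum_boole,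
            filter_univ_mem, Nat.cast_id]
          ring
      _ ≤ ∑ _t : α, 1 := sum_le_sum fun t _ ↦ hχ t
      _ = Fintype.card α := by rw [sum_const, card_univ, smul_eq_mul, mul_one]
  lia

theorem exists_even_walk {V : Type*} {G : SimpleGraph V} (hconn : G.Preconnected)
    (hbip : ¬ G.IsBipartite) (x y : V) : ∃ p : G.Walk x y, Even p.length := by
  rw [IsBipartite, two_colorable_iff_forall_loop_even] at hbip
  push Not at hbip
  obtain ⟨u, loop, hloop⟩ := hbip
  obtain ⟨p⟩ := hconn x u
  obtain ⟨q⟩ := hconn u y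
  rcases Nat.even_or_odd (p.append q).length with h | h
  · exact ⟨_, h⟩
  · refine ⟨p.append (loop.append q), ?_⟩
    rw [Walk.length_append] at h ⊢
    rw [Walk.length_append]
    grind

section TightWalk

variable {V : Type*} [DecidableEq V] {C : Finset (Finset V)} {x a a' b b' c : V}

/-- One step of a tight walk in `C`, on ordered triples of consecutive vertices: the window
`(a, b, c)` is shifted to `(b, c, d)`. Only the triple that is left has to be an edge of `C`. -/
def tightStep (C : Finset (Finset V)) : SetRel (V × V × V) (V × V × V) :=
  {((a, b, c), (b', c', _)) | b' = b ∧ c' = c ∧ {a, b, c} ∈ C}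

theorem mem_tightStep (h : {a, b, c} ∈ C) (d : V) : ((a, b, c), (b, c, d)) ∈ tightStep C :=
  ⟨rfl, rfl, h⟩

theorem isJoinedMod_tightStep (h : {x, a, b} ∈ C) (h' : {x, a', b} ∈ C) (c : V) :
    IsJoinedMod (tightStep C) (0 : ZMod 3) (x, a, b) (x, a', c) := by
  have h₁ : ((x, a, b), (a, b, x)) ∈ tightStep C := mem_tightStep h x
  have h₂ : ((a, b, x), (b, x, a')) ∈ tightStep C :=
    mem_tightStep (by rwa [triple_rotate]) a'
  have h₃ : ((b, x, a'), (x, a', c)) ∈ tightStep C :=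
    mem_tightStep (by rwa [← triple_rotate]) c
  exact .cons h₁ (.cons h₂ (.cons h₃ (.refl _)))

theorem isJoinedMod_of_even_walk : ∀ {a a' : V} (p : (linkGraph C x).Walk a a') {b c : V},
    Even p.length → (linkGraph C x).Adj a b → (linkGraph C x).Adj a' c →
    IsJoinedMod (tightStep C) (0 : ZMod 3) (x, a, b) (x, a', c)
  | _, _, .nil, _, c, _, hab, _ => isJoinedMod_tightStep hab.2 hab.2 c
  | _, _, .cons _ .nil, _, _, hp, _, _ => absurd hp (by simp)
  | _, _, .cons (v := d) had (.cons (v := e) hde p), _, _, hp, hab, hc => by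
    have hp : Even p.length := by simpa [parity_simps] using hp
    exact (isJoinedMod_tightStep hab.2 hab.2 d).trans
      ((isJoinedMod_tightStep had.2 hde.symm.2 d).trans
        (isJoinedMod_of_even_walk p hp hde.symm hc))

theorem IsDenseCluster.isJoinedMod_swap [Fintype V] {A : Finset V}
    (hA : IsDenseCluster (linkGraph C x) A) (ha : a ∈ A) (hb : b ∈ A)
    (hab : (linkGraph C x).Adj a b) :
    IsJoinedMod (tightStep C) (0 : ZMod 3) (x, a, b) (x, b, a) := by
  obtain ⟨p, hp⟩ := exists_even_walk hA.preconnected hA.not_isBipartite_induce ⟨a, ha⟩ ⟨b, hb⟩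
  exact isJoinedMod_of_even_walk (p.map (Embedding.induce _).toHom) (by rwa [Walk.length_map])
    hab hab.symm

theorem exists_adj_linkGraph_adj_linkGraph [Fintype V] [Nonempty V] {A : V → Finset V}
    (hA : ∀ v, IsDenseCluster (linkGraph C v) (A v)) :
    ∃ x y z, (y, z) ∈ (linkGraph C x).interedges (A x) (A x) ∧
      (z, x) ∈ (linkGraph C y).interedges (A y) (A y) := by
  set T : Finset (Σ _ : V, V × V) := univ.sigma fun v ↦ (linkGraph C v).interedges (A v) (A v)
  have hT : Fintype.card (Σ _ : V, V × V) < 3 * #T := by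
    have hsum : ∑ _v : V, 4 * Fintype.card V ^ 2 <
        ∑ v, 9 * #((linkGraph C v).interedges (A v) (A v)) :=
      sum_lt_sum_of_nonempty univ_nonempty fun v _ ↦ (hA v).four_mul_sq_lt
    rw [sum_const, card_univ, smul_eq_mul, ← mul_sum, ← card_sigma] at hsum
    rw [Fintype.card_sigma, sum_const, card_univ, Fintype.card_prod, smul_eq_mul]
    linarith
  obtain ⟨⟨x, y, z⟩, ht, ht'⟩ :=
    exists_mem_apply_mem_of_card_lt (ρ := fun t ↦ ⟨t.2.1, t.2.2, t.1⟩) (fun _ ↦ rfl) hT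
  exact ⟨x, y, z, (mem_sigma.1 ht).2, (mem_sigma.1 ht').2⟩

theorem exists_isJoinedMod_one_self [Fintype V] [Nonempty V]
    (hlink : ∀ v, ∃ A, IsDenseCluster (linkGraph C v) A) :
    ∃ t, IsJoinedMod (tightStep C) (1 : ZMod 3) t t := by
  choose A hA using hlink
  obtain ⟨x, y, z, hx, hy⟩ := exists_adj_linkGraph_adj_linkGraph hA
  obtain ⟨hyA, hzA, hyz⟩ := (linkGraph C x).mk_mem_interedges_iff.1 hx
  obtain ⟨hzA', hxA, hzx⟩ := (linkGraph C y).mk_mem_interedges_iff.1 hy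
  have hrotate {a b c : V} (h : {a, b, c} ∈ C) :
      IsJoinedMod (tightStep C) (2 : ZMod 3) (a, b, c) (c, a, b) :=
    .cons (mem_tightStep h a) (.cons (mem_tightStep (by rwa [triple_rotate]) b) (.refl _))
  refine ⟨(x, y, z), ?_⟩
  have h₁ := (hA x).isJoinedMod_swap hyA hzA hyz
  have h₂ := (hA y).isJoinedMod_swap hxA hzA' hzx.symm
  -- The residues add up to `0 + 2 + 0 + 2 = 1`.
  exact h₁.trans ((hrotate hyz.symm.2).trans (h₂.trans (hrotate hzx.2)))

theorem exists_closed_tight_walk (hC : (C : Set (Finset V)).Sized 3) {t : V × V × V}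
    (ht : IsJoinedMod (tightStep C) (1 : ZMod 3) t t) :
    ∃ m : ℕ, 3 ≤ m ∧ m % 3 = 1 ∧ ∃ w : ZMod m → V, ∀ i : ZMod m,
      w i ≠ w (i + 1) ∧ w i ≠ w (i + 2) ∧ w (i + 1) ≠ w (i + 2) ∧
      ({w i, w (i + 1), w (i + 2)} : Finset V) ∈ C := by
  obtain ⟨m, hm, u, hu⟩ := ht.exists_cycle one_ne_zero
  have hedge (i : ZMod m) : {(u i).1, (u (i + 1)).1, (u (i + 2)).1} ∈ C := by
    obtain ⟨h₁, h₂, h₃⟩ := hu i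
    obtain ⟨h₄, -, -⟩ := hu (i + 1)
    rw [add_assoc, one_add_one_eq_two] at h₄
    rwa [h₁, h₄, h₂]
  have hm1 : m ≠ 1 := by
    rintro rfl
    exact (ne_of_card_triple (hC (hedge 0))).1 (by congr)
  have hmod : m % 3 = 1 := (ZMod.natCast_eq_natCast_iff' m 1 3).1 (by simpa using hm)
  refine ⟨m, by lia, hmod, fun i ↦ (u i).1, fun i ↦ ?_⟩
  obtain ⟨h₁, h₂, h₃⟩ := ne_of_card_triple (hC (hedge i))
  exact ⟨h₁, h₂, h₃, hedge i⟩

end TightWalk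

theorem exists_forall_five_mul_sq_lt {ε : ℝ} (hε : 0 < ε) :
    ∃ n₀ : ℕ, ∀ n ≥ n₀, 0 < n ∧ ∀ d : ℕ,
      (5 / 9 + ε) * ((n - 1).choose 2 : ℝ) ≤ d → 5 * n ^ 2 < 18 * d := by
  obtain ⟨N, hN⟩ := exists_nat_gt (5 / ε)
  refine ⟨max N 4, fun n hn ↦ ⟨by lia, fun d hd ↦ ?_⟩⟩
  have hn4 : (4 : ℝ) ≤ n := by exact_mod_cast (le_max_right N 4).trans hn
  have hεn : 5 < ε * n := by
    rw [mul_comm, ← div_lt_iff₀ hε]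
    exact hN.trans_le (by exact_mod_cast (le_max_left N 4).trans hn)
  rw [Nat.cast_choose_two, Nat.cast_pred (by lia)] at hd
  have hprod : 3 / 8 * (n : ℝ) ^ 2 ≤ (n - 1) * (n - 1 - 1) := by nlinarith
  have hε_prod : ε * (3 / 8 * (n : ℝ) ^ 2) ≤ ε * ((n - 1) * (n - 1 - 1)) := by gcongr
  have hε_sq : 5 * (n : ℝ) ≤ ε * n * n := by gcongr
  have hreal : 5 * (n : ℝ) ^ 2 < 18 * d := by linarith
  exact_mod_cast hreal

theorem stmt_9_general {V : Type*} [Fintype V] [Nonempty V] [DecidableEq V]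
    (E : Finset (Finset V)) (hE : ∀ e ∈ E, #e = 3)
    (hdeg : ∀ v, 5 * Fintype.card V ^ 2 < 18 * #{e ∈ E | v ∈ e}) :
    ∃ C ⊆ E, (∀ v, ∃ e ∈ C, v ∈ e) ∧ IsTightConnected C ∧
      (∃ ω : Finset V → ℝ, (∀ e, 0 ≤ ω e) ∧ (∀ e, ω e ≤ 1) ∧
        (∀ v, ∑ e ∈ E with v ∈ e, ω e ≤ 1) ∧ ∑ e ∈ E, ω e = (Fintype.card V : ℝ) / 3 ∧
        ∀ e ∈ E, e ∉ C → ω e = 0) ∧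
      ∃ m : ℕ, 3 ≤ m ∧ m % 3 = 1 ∧ ∃ w : ZMod m → V, ∀ i : ZMod m,
        w i ≠ w (i + 1) ∧ w i ≠ w (i + 2) ∧ w (i + 1) ≠ w (i + 2) ∧
        ({w i, w (i + 1), w (i + 2)} : Finset V) ∈ C := by
  have hE : (E : Set (Finset V)).Sized 3 := fun e ↦ hE e
  have hlink (v : V) : ∃ A, IsDenseCluster (linkGraph E v) A := exists_isDenseCluster <|
    (hdeg v).trans_le (by grw [card_filter_mem_le_card_edgeFinset_linkGraph hE])
  obtain ⟨C, hCE, hconn, hlink⟩ := exists_isTightConnected_isDenseCluster hE hlink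
  have hC : (C : Set (Finset V)).Sized 3 := hE.mono hCE
  obtain ⟨ω, hωC⟩ := exists_isPerfectFractionalMatching_of_isDenseCluster hC hlink
  have hω := hωC.mono hCE
  refine ⟨C, hCE, fun v ↦ ?_, hconn, ⟨ω, hω.nonneg, hω.le_one fun e he ↦ ?_,
    fun v ↦ (hω.sum_eq_one v).le, ?_, fun e _ ↦ hωC.eq_zero_of_notMem e⟩, ?_⟩
  · obtain ⟨A, hA⟩ := hlink v
    obtain ⟨x, -, y, -, hxy⟩ := hA.exists_adj
    exact ⟨{v, x, y}, hxy.2, mem_insert_self _ _⟩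
  · exact card_pos.1 (by rw [hE he]; exact three_pos)
  · exact eq_div_of_mul_eq three_ne_zero (by rw [mul_comm, ← hω.mul_sum_eq_card hE]; rfl)
  · obtain ⟨t, ht⟩ := exists_isJoinedMod_one_self hlink
    exact exists_closed_tight_walk hC ht

/-- For every `ε > 0` there exists `n0` such that for every `n ≥ n0` and every
3-graph `G` on an `n`-element vertex set with minimum 1-degree `δ_1(G) ≥ (5/9+ε)·C(n−1,2)`,
there is a set of edges `C ⊆ E(G)` such that: (1) every vertex lies in some edge of `C`;
(2) `C` is tight-connected; (3) there is a fractional matching of `G` of size `n/3` vanishing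
outside `C`; and (4) there is a closed tight walk of order `m ≡ 1 (mod 3)`, `m ≥ 3`, all of
whose edges belong to `C`. -/
theorem stmt_9 (ε : ℝ) (hε : 0 < ε) : ∃ n0 : ℕ, ∀ n : ℕ, n0 ≤ n →
    ∀ (V : Type) [Fintype V] [DecidableEq V], Fintype.card V = n →
    ∀ E : Finset (Finset V), (∀ e ∈ E, e.card = 3) →
    (∀ v : V, (5/9 + ε) * ((n-1).choose 2 : ℝ) ≤ ((E.filter (fun e => v ∈ e)).card : ℝ)) →
    ∃ C : Finset (Finset V), C ⊆ E ∧
      (∀ v : V, ∃ e ∈ C, v ∈ e) ∧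
      (∀ e ∈ C, ∀ f ∈ C, ∃ (m : ℕ) (w : ℕ → Finset V), w 0 = e ∧ w m = f ∧
        (∀ i ≤ m, w i ∈ C) ∧ (∀ i < m, ((w i) ∩ (w (i+1))).card = 2)) ∧
      (∃ ω : Finset V → ℝ, (∀ e, 0 ≤ ω e) ∧ (∀ e, ω e ≤ 1) ∧
        (∀ v : V, ∑ e ∈ E.filter (fun e => v ∈ e), ω e ≤ 1) ∧
        (∑ e ∈ E, ω e) = (n : ℝ) / 3 ∧
        (∀ e ∈ E, e ∉ C → ω e = 0)) ∧
      (∃ m : ℕ, 3 ≤ m ∧ m % 3 = 1 ∧ ∃ w : ZMod m → V, ∀ i : ZMod m,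
        w i ≠ w (i+1) ∧ w i ≠ w (i+2) ∧ w (i+1) ≠ w (i+2) ∧
        ({w i, w (i+1), w (i+2)} : Finset V) ∈ C) := by
  obtain ⟨n₀, hn₀⟩ := exists_forall_five_mul_sq_lt hε
  refine ⟨n₀, fun n hn V _ _ hV E hE hdeg ↦ ?_⟩
  subst hV
  have : Nonempty V := Fintype.card_pos_iff.1 (hn₀ _ hn).1
  exact stmt_9_general E hE fun v ↦ (hn₀ _ hn).2 _ (hdeg v)
end

section
/- There exists n0 such that the following holds for every n ≥ n0. Let L be a 3-graph on n vertices with exactly ⌈(5/8)·binom(n,3)⌉ edges, and let C be a tight component of L with |C| ≥ (1/2)·binom(n,3). Then |C| · binom(n,2) ≥ e(L) · |∂C|, where ∂C denotes the set of 2-element vertex sets contained in at least one edge of C. -/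
/-- A set `C` of edges of a `k`-graph is tight-connected: between any two edges of `C` there is
a finite sequence of edges from `C` in which consecutive edges intersect in `k−1` vertices. -/
def TightConn {V : Type*} [DecidableEq V] (k : ℕ) (C : Finset (Finset V)) : Prop :=
  ∀ e ∈ C, ∀ f ∈ C, ∃ (m : ℕ) (w : ℕ → Finset V), w 0 = e ∧ w m = f ∧
    (∀ i ≤ m, w i ∈ C) ∧ (∀ i < m, ((w i) ∩ (w (i+1))).card = k - 1)

/-- The shadow of a set `C` of edges: the `j`-element vertex sets contained in some edge of `C`. -/
def shadowOf {V : Type*} [Fintype V] [DecidableEq V] (j : ℕ) (C : Finset (Finset V)) :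
    Finset (Finset V) :=
  (Finset.univ.powersetCard j).filter (fun S => ∃ e ∈ C, S ⊆ e)

/-!
Let `C` be a tight component of an `(r+1)`-graph `E` on `n` vertices and put `D = E \ C`. Distinct
edges sharing `r` vertices lie in the same tight component, so the shadows of `C` and `D` are
disjoint and `|∂C| + |∂D| ≤ binom(n, r)`. By the Kruskal–Katona theorem a large `C` has a large
shadow, hence `D` has a small one; applied to `D`, it also bounds the ratio `|D| / |∂D|`: if `k` is
maximal with `binom(k, r+1) ≤ |D|`, then `binom(k, r) ≤ |∂D|` and `(r+1)|D| ≤ (k+1)|∂D|`. If `E`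
has density at least `δ` and `k + 1 ≤ δ(n - r)`, this gives `|D| / |∂D| ≤ |E| / binom(n, r)`.
Removing `D` from `E` and `∂D` from the complete `r`-graph then leaves a ratio of at least
`|E| / binom(n, r)`, which is the claim.

If `C` has density `c ^ (r+1)`, then `∂C` has density at least about `c ^ r` and `∂D` at least about
`(k/n) ^ r`, so `c ^ r + δ ^ r > 1` suffices for large `n`.
-/

open Finset Filter Function Relation
open scoped FinsetFamily Topology Nat

section TightConnectivity

variable {V : Type*} [DecidableEq V] {k r : ℕ} {C E : Finset (Finset V)} {e f S : Finset V}

/-- Adjacency of edges inside the set of edges `C` of a `k`-graph: both edges lie in `C` and they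
share `k - 1` vertices. -/
def TightAdj (k : ℕ) (C : Finset (Finset V)) (e f : Finset V) : Prop :=
  e ∈ C ∧ f ∈ C ∧ #(e ∩ f) = k - 1

instance TightAdj.stdSymm : Std.Symm (TightAdj k C) where
  symm _ _ := fun ⟨he, hf, hef⟩ => ⟨hf, he, by rwa [inter_comm]⟩

theorem exists_walk_of_reflTransGen_tightAdj (he : e ∈ C) (h : ReflTransGen (TightAdj k C) e f) :
    ∃ (m : ℕ) (w : ℕ → Finset V), w 0 = e ∧ w m = f ∧
      (∀ i ≤ m, w i ∈ C) ∧ ∀ i < m, #(w i ∩ w (i + 1)) = k - 1 := by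
  induction h with
  | refl => exact ⟨0, fun _ => e, rfl, rfl, fun _ _ => he, by simp⟩
  | @tail a b _ hab ih =>
    obtain ⟨m, w, h0, hm, hC, hadj⟩ := ih
    refine ⟨m + 1, fun i => if i ≤ m then w i else b, by simpa using h0, by simp, ?_, ?_⟩
    · intro i _
      dsimp only
      split_ifs with him
      exacts [hC i him, hab.2.1]
    · intro i hi
      obtain him | rfl := Nat.lt_succ_iff_lt_or_eq.1 hi
      · simpa [him.le, Nat.succ_le_of_lt him] using hadj i him
      · simpa [hm] using hab.2.2

theorem tightConn_iff_reflTransGen :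
    TightConn k C ↔ ∀ e ∈ C, ∀ f ∈ C, ReflTransGen (TightAdj k C) e f := by
  refine ⟨fun h e he f hf => ?_, fun h e he f hf =>
    exists_walk_of_reflTransGen_tightAdj he (h e he f hf)⟩
  obtain ⟨m, w, rfl, rfl, hC, hadj⟩ := h e he f hf
  have hsteps : ReflTransGen (TightAdj k C on w) 0 m :=
    reflTransGen_of_succ_of_le _
      (fun i hi => ⟨hC i hi.2.le, hC (i + 1) hi.2, hadj i hi.2⟩) m.zero_le
  exact ReflTransGen.lift w le_rfl 0 m hsteps

theorem TightConn.insert_of_card_inter (hC : TightConn k C) (he : e ∈ C) (hef : #(e ∩ f) = k - 1) :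
    TightConn k (insert f C) := by
  rw [tightConn_iff_reflTransGen] at hC ⊢
  have reach_from_e : ∀ a ∈ insert f C, ReflTransGen (TightAdj k (insert f C)) e a := by
    intro a ha
    obtain rfl | ha := mem_insert.1 ha
    · exact .single ⟨mem_insert_of_mem he, mem_insert_self _ _, hef⟩
    · have hmono : TightAdj k C ≤ TightAdj k (insert f C) := fun _ _ ⟨hx, hy, hxy⟩ =>
        ⟨mem_insert_of_mem hx, mem_insert_of_mem hy, hxy⟩
      exact ReflTransGen.mono hmono e a (hC e he a ha)
  exact fun a ha b hb => (symm (reach_from_e a ha)).trans (reach_from_e b hb)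

/-- `C` is a tight component of the `k`-graph with edge set `E`: a maximal nonempty tight-connected
set of edges. -/
def IsTightComponent (k : ℕ) (E C : Finset (Finset V)) : Prop :=
  Maximal (fun C' => C'.Nonempty ∧ C' ⊆ E ∧ TightConn k C') C

namespace IsTightComponent

theorem nonempty (hC : IsTightComponent k E C) : C.Nonempty := hC.prop.1

theorem subset (hC : IsTightComponent k E C) : C ⊆ E := hC.prop.2.1

theorem tightConn (hC : IsTightComponent k E C) : TightConn k C := hC.prop.2.2

theorem mem_of_card_inter (hC : IsTightComponent k E C) (he : e ∈ C) (hf : f ∈ E)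
    (hef : #(e ∩ f) = k - 1) : f ∈ C :=
  have hconn : TightConn k (insert f C) := hC.tightConn.insert_of_card_inter he hef
  hC.le_of_ge ⟨insert_nonempty f C, insert_subset hf hC.subset, hconn⟩
    (subset_insert f C) (mem_insert_self f C)

end IsTightComponent

theorem card_inter_eq_of_subset_of_ne (he : #e = r + 1) (hf : #f = r + 1) (hef : e ≠ f)
    (hSe : S ⊆ e) (hSf : S ⊆ f) (hS : #S = r) : #(e ∩ f) = r := by
  have hlt : #(e ∩ f) < #e := by
    refine card_lt_card (inter_subset_left.ssubset_of_ne fun h => hef ?_)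
    exact eq_of_subset_of_card_le (inter_eq_left.1 h) (by omega)
  have hle : #S ≤ #(e ∩ f) := card_le_card (subset_inter hSe hSf)
  omega

theorem IsTightComponent.disjoint_shadow (hE : (E : Set (Finset V)).Sized (r + 1))
    (hC : IsTightComponent (r + 1) E C) : Disjoint (∂ C) (∂ (E \ C)) := by
  refine disjoint_left.2 fun S hSC hSD => ?_
  obtain ⟨e, he, hSe, hcard⟩ := mem_shadow_iff_exists_mem_card_add_one.1 hSC
  obtain ⟨f, hf, hSf, -⟩ := mem_shadow_iff_exists_mem_card_add_one.1 hSD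
  obtain ⟨hfE, hfC⟩ := mem_sdiff.1 hf
  have he_card : #e = r + 1 := hE (hC.subset he)
  have hef : e ≠ f := fun h => hfC (h ▸ he)
  exact hfC (hC.mem_of_card_inter he hfE
    (card_inter_eq_of_subset_of_ne he_card (hE hfE) hef hSe hSf (by omega)))

end TightConnectivity

section Shadow

variable {V : Type*} [DecidableEq V] {k r : ℕ} {𝒜 ℬ : Finset (Finset V)}

theorem shadowOf_eq_shadow [Fintype V] (h𝒜 : (𝒜 : Set (Finset V)).Sized (r + 1)) :
    shadowOf r 𝒜 = ∂ 𝒜 := by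
  ext S
  simp only [shadowOf, mem_filter, mem_powersetCard, subset_univ, true_and,
    mem_shadow_iff_exists_mem_card_add_one]
  constructor
  · rintro ⟨hS, e, he, hSe⟩
    exact ⟨e, he, hSe, by rw [h𝒜 he, hS]⟩
  · rintro ⟨e, he, hSe, hcard⟩
    exact ⟨by have := h𝒜 he; omega, e, he, hSe⟩

theorem card_shadow_add_card_shadow_le_choose [Fintype V]
    (h𝒜 : (𝒜 : Set (Finset V)).Sized (r + 1)) (hℬ : (ℬ : Set (Finset V)).Sized (r + 1))
    (hdisj : Disjoint (∂ 𝒜) (∂ ℬ)) :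
    #(∂ 𝒜) + #(∂ ℬ) ≤ (Fintype.card V).choose r := by
  rw [← card_union_of_disjoint hdisj]
  refine Set.Sized.card_le ?_
  rw [coe_union, Set.sized_union]
  exact ⟨h𝒜.shadow, hℬ.shadow⟩

theorem shadow_map {W : Type*} [DecidableEq W] (g : V ↪ W) (𝒜 : Finset (Finset V)) :
    ∂ (𝒜.map (mapEmbedding g).toEmbedding) = (∂ 𝒜).map (mapEmbedding g).toEmbedding := by
  ext T
  simp only [mem_shadow_iff, Finset.mem_map, RelEmbedding.coe_toEmbedding, mapEmbedding_apply]
  constructor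
  · rintro ⟨_, ⟨s, hs, rfl⟩, b, hb, rfl⟩
    obtain ⟨a, ha, rfl⟩ := Finset.mem_map.1 hb
    exact ⟨s.erase a, ⟨s, hs, a, ha, rfl⟩, map_erase g s a⟩
  · rintro ⟨_, ⟨s, hs, a, ha, rfl⟩, rfl⟩
    exact ⟨s.map g, ⟨s, hs, rfl⟩, g a, mem_map_of_mem g ha, (map_erase g s a).symm⟩

theorem choose_le_card_shadow [Fintype V] (h𝒜 : (𝒜 : Set (Finset V)).Sized (r + 1))
    (hrk : r + 1 ≤ k) (hkV : k ≤ Fintype.card V) (hk : k.choose (r + 1) ≤ #𝒜) :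
    k.choose r ≤ #(∂ 𝒜) := by
  let F := (mapEmbedding (Fintype.equivFin V).toEmbedding).toEmbedding
  have hsized : (𝒜.map F : Set (Finset (Fin (Fintype.card V)))).Sized (r + 1) := by
    rintro _ ht
    obtain ⟨s, hs, rfl⟩ := Finset.mem_map.1 (mem_coe.1 ht)
    exact (card_map _).trans (h𝒜 hs)
  have := kruskal_katona_lovasz_form (i := 1) (by omega) hrk hkV hsized (by rwa [card_map])
  rwa [Function.iterate_one, shadow_map, card_map] at this

theorem exists_choose_le_card_shadow_and_card_le_choose [Finite V]
    (h𝒜 : (𝒜 : Set (Finset V)).Sized (r + 1)) (hne : 𝒜.Nonempty) :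
    ∃ k : ℕ, k.choose r ≤ #(∂ 𝒜) ∧ #𝒜 ≤ (k + 1).choose (r + 1) := by
  have := Fintype.ofFinite V
  let P (m : ℕ) : Prop := m.choose (r + 1) ≤ #𝒜
  let k := Nat.findGreatest P (Fintype.card V)
  have hrV : r + 1 ≤ Fintype.card V := by
    obtain ⟨e, he⟩ := hne
    exact h𝒜 he ▸ card_le_univ e
  have hr : (r + 1).choose (r + 1) ≤ #𝒜 := by simpa using hne.card_pos
  have hkV : k ≤ Fintype.card V := Nat.findGreatest_le _
  refine ⟨k, choose_le_card_shadow h𝒜 (Nat.le_findGreatest hrV hr) hkV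
    (Nat.findGreatest_spec (P := P) hrV hr), ?_⟩
  obtain hlt | heq := hkV.lt_or_eq
  · exact (not_le.1 (Nat.findGreatest_is_greatest (P := P) k.lt_succ_self hlt)).le
  · exact h𝒜.card_le.trans (Nat.choose_le_choose _ (by omega))

end Shadow

section Binomial

variable {c δ : ℝ} {k m n q r s : ℕ}

theorem mul_add_one_sub_le_of_pow_mul_choose_le (hc : 0 ≤ c) (hq : q ≠ 0)
    (h : c ^ q * n.choose q ≤ m.choose q) : c * (n + 1 - q : ℕ) ≤ m := by
  refine le_of_pow_le_pow_left₀ hq m.cast_nonneg ?_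
  have hfact : (0 : ℝ) < q ! := mod_cast q.factorial_pos
  rw [← div_le_div_iff_of_pos_right hfact]
  calc (c * (n + 1 - q : ℕ)) ^ q / (q ! : ℝ)
      = c ^ q * (((n + 1 - q : ℕ) : ℝ) ^ q / q !) := by rw [mul_pow, mul_div_assoc]
    _ ≤ c ^ q * n.choose q := by gcongr; exact Nat.pow_le_choose q n
    _ ≤ m.choose q := h
    _ ≤ (m : ℝ) ^ q / q ! := Nat.choose_le_pow_div q m

theorem add_one_sub_pow_add_le_pow_of_choose_add_le (h : s.choose r + k.choose r ≤ n.choose r) :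
    (s + 1 - r) ^ r + (k + 1 - r) ^ r ≤ n ^ r :=
  calc (s + 1 - r) ^ r + (k + 1 - r) ^ r
      ≤ s.descFactorial r + k.descFactorial r :=
        add_le_add (s.pow_sub_le_descFactorial r) (k.pow_sub_le_descFactorial r)
    _ = r ! * (s.choose r + k.choose r) := by
        simp only [Nat.descFactorial_eq_factorial_mul_choose, mul_add]
    _ ≤ r ! * n.choose r := Nat.mul_le_mul_left _ h
    _ = n.descFactorial r := (n.descFactorial_eq_factorial_mul_choose r).symm
    _ ≤ n ^ r := n.descFactorial_le_pow r

theorem eventually_pow_lt_mul_sub_pow_add_mul_sub_pow (h : 1 < c ^ r + δ ^ r) (a b : ℝ) :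
    ∀ᶠ n : ℕ in atTop, (n : ℝ) ^ r < (c * n - a) ^ r + (δ * n - b) ^ r := by
  have tendsto_sub_div (x y : ℝ) : Tendsto (fun n : ℕ => x - y / n) atTop (𝓝 x) := by
    simpa using tendsto_const_nhds.sub (tendsto_const_div_atTop_nhds_zero_nat y)
  have hlim := ((tendsto_sub_div c a).pow r).add ((tendsto_sub_div δ b).pow r)
  filter_upwards [hlim.eventually_const_lt h, eventually_gt_atTop 0] with n hn hpos
  have hn0 : (0 : ℝ) < n := mod_cast hpos
  have factor_out (x y : ℝ) : x * n - y = n * (x - y / n) := by field_simp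
  rw [factor_out, factor_out, mul_pow, mul_pow, ← mul_add]
  exact lt_mul_of_one_lt_right (pow_pos hn0 r) hn

theorem eventually_add_one_le_mul_sub_of_choose_add_le (hc : 0 < c) (hδ : 0 < δ)
    (h : 1 < c ^ r + δ ^ r) :
    ∀ᶠ n : ℕ in atTop, ∀ s k : ℕ, c ^ (r + 1) * n.choose (r + 1) ≤ (s + 1).choose (r + 1) →
      s.choose r + k.choose r ≤ n.choose r → (k + 1 : ℝ) ≤ δ * (n - r : ℕ) := by
  have eventually_nonneg {x : ℝ} (hx : 0 < x) (y : ℝ) : ∀ᶠ n : ℕ in atTop, y ≤ x * n :=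
    (tendsto_natCast_atTop_atTop.const_mul_atTop hx).eventually_ge_atTop y
  have sub_le_cast_sub (x y : ℕ) : (x - y : ℝ) ≤ (x - y : ℕ) := by
    rw [sub_le_iff_le_add]
    exact_mod_cast le_tsub_add
  filter_upwards [eventually_pow_lt_mul_sub_pow_add_mul_sub_pow h (c * r + r) (δ * r + r),
    eventually_nonneg hc (c * r + r), eventually_nonneg hδ (δ * r + r)] with n hlt hcn hδn
  intro s k hs hsk
  by_contra! hk
  have hs_le : c * (n - r : ℕ) ≤ (s + 1 : ℕ) := by
    simpa using mul_add_one_sub_le_of_pow_mul_choose_le hc.le r.succ_ne_zero hs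
  have shift {x : ℝ} {t : ℕ} (hx : 0 < x) (ht : x * (n - r : ℕ) ≤ (t + 1 : ℕ)) :
      x * n - (x * r + r) ≤ (t + 1 - r : ℕ) := by
    have := mul_le_mul_of_nonneg_left (sub_le_cast_sub n r) hx.le
    linarith [sub_le_cast_sub (t + 1) r]
  have hpow : ((s + 1 - r : ℕ) : ℝ) ^ r + ((k + 1 - r : ℕ) : ℝ) ^ r ≤ (n : ℝ) ^ r :=
    mod_cast add_one_sub_pow_add_le_pow_of_choose_add_le hsk
  refine (hlt.trans_le ?_).not_ge hpow
  exact add_le_add (pow_le_pow_left₀ (sub_nonneg.2 hcn) (shift hc hs_le) r)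
    (pow_le_pow_left₀ (sub_nonneg.2 hδn) (shift hδ (mod_cast hk.le)) r)

theorem mul_choose_le_mul_of_le_choose {d e x : ℕ} (hx : k.choose r ≤ x)
    (hd : d ≤ (k + 1).choose (r + 1)) (he : (k + 1) * n.choose r ≤ (r + 1) * e) :
    d * n.choose r ≤ e * x := by
  have hdx : (r + 1) * d ≤ (k + 1) * x :=
    calc (r + 1) * d ≤ (r + 1) * (k + 1).choose (r + 1) := by gcongr
      _ = (k + 1) * k.choose r := by rw [mul_comm, ← Nat.add_one_mul_choose_eq]
      _ ≤ (k + 1) * x := by gcongr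
  refine Nat.le_of_mul_le_mul_left ?_ r.succ_pos
  calc (r + 1) * (d * n.choose r) = (r + 1) * d * n.choose r := (mul_assoc _ _ _).symm
    _ ≤ (k + 1) * x * n.choose r := by gcongr
    _ = (k + 1) * n.choose r * x := by ring
    _ ≤ (r + 1) * e * x := by gcongr
    _ = (r + 1) * (e * x) := mul_assoc _ _ _

theorem add_one_mul_choose_le_of_le_mul_choose {e : ℕ} (hk : (k + 1 : ℝ) ≤ δ * (n - r : ℕ))
    (he : δ * n.choose (r + 1) ≤ e) : (k + 1) * n.choose r ≤ (r + 1) * e := by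
  have hchoose : ((n - r : ℕ) * n.choose r : ℝ) = (r + 1) * n.choose (r + 1) := by
    rw [mul_comm, mul_comm (r + 1 : ℝ)]
    exact_mod_cast (n.choose_succ_right_eq r).symm
  have hreal : (k + 1 : ℝ) * n.choose r ≤ (r + 1) * e :=
    calc (k + 1 : ℝ) * n.choose r ≤ δ * (n - r : ℕ) * n.choose r := by gcongr
      _ = (r + 1) * (δ * n.choose (r + 1)) := by rw [mul_assoc, hchoose]; ring
      _ ≤ (r + 1) * e := by gcongr
  exact_mod_cast hreal

end Binomial

theorem add_mul_le_mul_of_mul_le_add_mul {c d x y N : ℕ} (hxy : x + y ≤ N)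
    (h : d * N ≤ (c + d) * y) : (c + d) * x ≤ c * N := by
  have : (c + d) * (x + y) ≤ (c + d) * N := by gcongr
  linarith

theorem stmt_11_general {r : ℕ} {c δ : ℝ} (hc : 0 < c) (hδ : 0 < δ) (h : 1 < c ^ r + δ ^ r) :
    ∀ᶠ n : ℕ in atTop, ∀ (V : Type*) [Fintype V] [DecidableEq V], Fintype.card V = n →
      ∀ E C : Finset (Finset V), (E : Set (Finset V)).Sized (r + 1) →
      IsTightComponent (r + 1) E C → δ * n.choose (r + 1) ≤ #E →
      c ^ (r + 1) * n.choose (r + 1) ≤ #C →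
      #E * #(shadowOf r C) ≤ #C * n.choose r := by
  filter_upwards [eventually_add_one_le_mul_sub_of_choose_add_le hc hδ h] with n hn
  rintro V _ _ rfl E C hE hC hEcard hCcard
  have hCsized : (C : Set (Finset V)).Sized (r + 1) := hE.mono (coe_subset.2 hC.subset)
  have hDsized : ((E \ C : Finset _) : Set (Finset V)).Sized (r + 1) :=
    hE.mono (coe_subset.2 sdiff_subset)
  have hshadow := card_shadow_add_card_shadow_le_choose hCsized hDsized (hC.disjoint_shadow hE)
  have hEsum : #E = #C + #(E \ C) := by rw [add_comm, card_sdiff_add_card_eq_card hC.subset]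
  have hD : #(E \ C) * (Fintype.card V).choose r ≤ #E * #(∂ (E \ C)) := by
    obtain hempty | hne := (E \ C).eq_empty_or_nonempty
    · simp [hempty]
    obtain ⟨s, hs_shadow, hs⟩ := exists_choose_le_card_shadow_and_card_le_choose hCsized hC.nonempty
    obtain ⟨k, hk_shadow, hk⟩ := exists_choose_le_card_shadow_and_card_le_choose hDsized hne
    have hk_le : (k + 1 : ℝ) ≤ δ * (Fintype.card V - r : ℕ) :=
      hn s k (hCcard.trans (mod_cast hs)) ((add_le_add hs_shadow hk_shadow).trans hshadow)
    exact mul_choose_le_mul_of_le_choose hk_shadow hk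
      (add_one_mul_choose_le_of_le_mul_choose hk_le hEcard)
  rw [shadowOf_eq_shadow hCsized, hEsum]
  rw [hEsum] at hD
  exact add_mul_le_mul_of_mul_le_add_mul hshadow hD

/-- There is `n0` such that for all `n ≥ n0`: if `L` is a 3-graph on `n`
vertices with exactly `⌈(5/8)·C(n,3)⌉` edges and `C` is a tight component of `L` with
`|C| ≥ (1/2)·C(n,3)`, then `|C| · C(n,2) ≥ e(L) · |∂C|`. -/
theorem stmt_11 : ∃ n0 : ℕ, ∀ n : ℕ, n0 ≤ n →
    ∀ (V : Type) [Fintype V] [DecidableEq V], Fintype.card V = n →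
    ∀ E : Finset (Finset V), (∀ e ∈ E, e.card = 3) →
    E.card = ⌈(5/8 : ℝ) * (n.choose 3 : ℝ)⌉₊ →
    ∀ C : Finset (Finset V), C ⊆ E → C.Nonempty → TightConn 3 C →
      (∀ C' : Finset (Finset V), C ⊆ C' → C' ⊆ E → TightConn 3 C' → C' = C) →
      (1/2 : ℝ) * (n.choose 3 : ℝ) ≤ (C.card : ℝ) →
      E.card * (shadowOf 2 C).card ≤ C.card * n.choose 2 := by
  -- `c = 79 / 100` satisfies both `c ^ 3 ≤ 1 / 2` and `1 < c ^ 2 + (5 / 8) ^ 2`.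
  obtain ⟨n0, hn0⟩ := eventually_atTop.1
    (stmt_11_general (r := 2) (c := 79 / 100) (δ := 5 / 8) (by norm_num) (by norm_num)
      (by norm_num))
  refine ⟨n0, fun n hn V _ _ hV E hE hEcard C hCE hne hconn hmax hCcard => ?_⟩
  have hcomp : IsTightComponent 3 E C :=
    ⟨⟨hne, hCE, hconn⟩, fun C' hC' hle => (hmax C' hle hC'.2.1 hC'.2.2).le⟩
  refine hn0 n hn V hV E C (fun e he => hE e he) hcomp (hEcard ▸ Nat.le_ceil _) (le_trans ?_ hCcard)
  gcongr
  norm_num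
end
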